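/- arXiv:2401.04019 — 8 statements merged into one kernel-verified Lean document; each statement's English description precedes it below -/
import Mathlib

section
/- Let a ∈ {1, 3} and let q be a complex number with |q| < 1. Then Σ_{j ∈ S_a} q^j = ∏_{n=1}^{∞} (1 − q^{8n})(1 + q^{8n−4+a})(1 + q^{8n−4−a}), where S_a is the set of non-negative integers j such that 16j + a² is a perfect square (equivalently, S_a = { k(4k − a) : k ∈ ℤ }). -/
/-!
The Jacobi triple product, in Ramanujan's two-variable form
`∑ k : ℤ, x ^ (k(k+1)/2) y ^ (k(k-1)/2) = (p; p)_∞ (-x; p)_∞ (-y; p)_∞` with `p = xy`, is obtained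
from its finite analogue, in which the `k`-th term carries a Gaussian binomial coefficient.
Multiplying by `∏ i < 2N, (1 - p ^ (i + 1))` turns this coefficient into a product of two tails of
the Euler product, so that no division is needed; the tails are uniformly bounded and tend to `1`,
and Tannery's theorem gives the limit. For `x = q ^ (4 + a)` and `y = q ^ (4 - a)` the `k`-th
exponent is `4k² + ak`, and `16(4k² + ak) + a² = (8k + a)²`. Since `t² ≡ a² mod 16` forces
`t ≡ ±a mod 8`, these exponents run through `S_a`, without repetition because `4 ∤ a`.
-/

open Filter Finset Topology

section GaussianBinomial

variable {R : Type*}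

/-- The Gaussian binomial coefficient `[n, j]_p`, defined by the `q`-Pascal rule so that it makes
sense for every element `p` of a semiring. -/
def gaussBinom [Semiring R] (p : R) : ℕ → ℕ → R
  | _, 0 => 1
  | 0, _ + 1 => 0
  | n + 1, j + 1 => gaussBinom p n j + p ^ (j + 1) * gaussBinom p n (j + 1)

@[simp]
lemma gaussBinom_zero_right [Semiring R] (p : R) (n : ℕ) : gaussBinom p n 0 = 1 := by
  cases n <;> rfl

lemma gaussBinom_succ_succ [Semiring R] (p : R) (n j : ℕ) :
    gaussBinom p (n + 1) (j + 1) = gaussBinom p n j + p ^ (j + 1) * gaussBinom p n (j + 1) := rfl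

lemma gaussBinom_eq_zero_of_lt [Semiring R] (p : R) {n j : ℕ} (h : n < j) :
    gaussBinom p n j = 0 := by
  induction n generalizing j with
  | zero => obtain ⟨j, rfl⟩ := Nat.exists_eq_succ_of_ne_zero h.ne'; rfl
  | succ n ih =>
    obtain ⟨j, rfl⟩ := Nat.exists_eq_succ_of_ne_zero (Nat.ne_zero_of_lt h)
    rw [Nat.succ_eq_add_one, gaussBinom_succ_succ, ih (by omega), ih (by omega), mul_zero, add_zero]

lemma gaussBinom_self [Semiring R] (p : R) (n : ℕ) : gaussBinom p n n = 1 := by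
  induction n with
  | zero => rfl
  | succ n ih => rw [gaussBinom_succ_succ, ih, gaussBinom_eq_zero_of_lt p n.lt_succ_self,
      mul_zero, add_zero]

lemma sum_gaussBinom_succ_mul [Semiring R] (p : R) (n : ℕ) (f : ℕ → R) :
    ∑ j ∈ range (n + 2), gaussBinom p (n + 1) j * f j =
      ∑ j ∈ range (n + 1), gaussBinom p n j * f (j + 1) +
        ∑ j ∈ range (n + 1), p ^ j * gaussBinom p n j * f j := by
  have hlast : ∑ j ∈ range (n + 1), p ^ j * gaussBinom p n j * f j =
      ∑ j ∈ range (n + 1), p ^ (j + 1) * gaussBinom p n (j + 1) * f (j + 1) + f 0 := by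
    have hzero := gaussBinom_eq_zero_of_lt p n.lt_succ_self
    simpa [sum_range_succ' _ (n + 1), hzero] using
      (sum_range_succ (fun j => p ^ j * gaussBinom p n j * f j) (n + 1)).symm
  simp only [hlast, sum_range_succ' _ (n + 1), gaussBinom_succ_succ, gaussBinom_zero_right,
    one_mul, add_mul, sum_add_distrib, add_assoc]

theorem prod_one_add_mul_pow_eq_sum_gaussBinom [CommSemiring R] (p z : R) (n : ℕ) :
    ∏ i ∈ range n, (1 + z * p ^ i) =
      ∑ j ∈ range (n + 1), gaussBinom p n j * (p ^ j.choose 2 * z ^ j) := by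
  induction n generalizing z with
  | zero => simp
  | succ n ih =>
    have hshift : ∏ i ∈ range n, (1 + z * p ^ (i + 1)) = ∏ i ∈ range n, (1 + z * p * p ^ i) :=
      prod_congr rfl fun i _ => by ring
    rw [prod_range_succ', hshift, ih, sum_gaussBinom_succ_mul, pow_zero, mul_one, mul_one_add,
      add_comm, sum_mul]
    congr 1 <;> refine sum_congr rfl fun j _ => ?_
    · rw [Nat.choose_succ_succ' j 1, Nat.choose_one_right]
      ring
    · ring

end GaussianBinomial

section EulerProduct

variable {R : Type*}

/-- The segment `∏ m ≤ i < n, (1 - p ^ (i + 1))` of the Euler product `(p; p)_∞`. -/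
def eulerSegment [CommRing R] (p : R) (m n : ℕ) : R := ∏ i ∈ Ico m n, (1 - p ^ (i + 1))

lemma eulerSegment_mul_eulerSegment [CommRing R] (p : R) {l m n : ℕ} (hlm : l ≤ m) (hmn : m ≤ n) :
    eulerSegment p l m * eulerSegment p m n = eulerSegment p l n :=
  prod_Ico_consecutive _ hlm hmn

lemma gaussBinom_mul_eulerSegment_zero [CommRing R] (p : R) (m n : ℕ) :
    gaussBinom p (m + n) m * eulerSegment p 0 n = eulerSegment p m (m + n) := by
  induction m generalizing n with
  | zero => simp
  | succ m ihm =>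
    induction n with
    | zero => simp [gaussBinom_self, eulerSegment]
    | succ n ihn =>
      have hpascal : gaussBinom p (m + 1 + (n + 1)) (m + 1) =
          gaussBinom p (m + (n + 1)) m + p ^ (m + 1) * gaussBinom p (m + 1 + n) (m + 1) := by
        rw [show m + 1 + (n + 1) = m + 1 + n + 1 by ring, gaussBinom_succ_succ,
          show m + 1 + n = m + (n + 1) by ring]
      have hfront : eulerSegment p m (m + (n + 1)) =
          (1 - p ^ (m + 1)) * eulerSegment p (m + 1) (m + 1 + n) := by
        rw [show m + (n + 1) = m + 1 + n by ring]
        exact prod_eq_prod_Ico_succ_bot (show m < m + 1 + n by omega) _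
      have hback : eulerSegment p (m + 1) (m + 1 + (n + 1)) =
          eulerSegment p (m + 1) (m + 1 + n) * (1 - p ^ (m + 1 + n + 1)) :=
        prod_Ico_succ_top (Nat.le_add_right _ n) _
      have hzero : eulerSegment p 0 (n + 1) = eulerSegment p 0 n * (1 - p ^ (n + 1)) :=
        prod_Ico_succ_top n.zero_le _
      have ihm' := ihm (n + 1)
      rw [hfront] at ihm'
      rw [hpascal, hback, add_mul, ihm', hzero]
      linear_combination p ^ (m + 1) * (1 - p ^ (n + 1)) * ihn

lemma eulerSegment_zero_add_mul_gaussBinom [CommRing R] (p : R) (m n : ℕ) :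
    eulerSegment p 0 (m + n) * gaussBinom p (m + n) m =
      eulerSegment p m (m + n) * eulerSegment p n (m + n) := by
  rw [← eulerSegment_mul_eulerSegment p n.zero_le (Nat.le_add_left n m),
    ← gaussBinom_mul_eulerSegment_zero p m n]
  ring

variable [NormedCommRing R] [NormOneClass R] {p : R}

lemma norm_eulerSegment_sub_one_le (hp : ‖p‖ < 1) (m n : ℕ) :
    ‖eulerSegment p m n - 1‖ ≤ Real.exp (‖p‖ ^ m / (1 - ‖p‖)) - 1 := by
  have hsum : ∑ i ∈ Ico m n, ‖-p ^ (i + 1)‖ ≤ ‖p‖ ^ m / (1 - ‖p‖) :=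
    calc ∑ i ∈ Ico m n, ‖-p ^ (i + 1)‖
        ≤ ∑ i ∈ Ico m n, ‖p‖ ^ i := sum_le_sum fun i _ => by
          rw [norm_neg]
          exact (norm_pow_le p _).trans (pow_le_pow_of_le_one (norm_nonneg p) hp.le i.le_succ)
      _ ≤ ‖p‖ ^ m / (1 - ‖p‖) := geom_sum_Ico_le_of_lt_one (norm_nonneg p) hp
  calc ‖eulerSegment p m n - 1‖
      ≤ Real.exp (∑ i ∈ Ico m n, ‖-p ^ (i + 1)‖) - 1 := by
        simpa only [eulerSegment, sub_eq_add_neg] using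
          norm_prod_one_add_sub_one_le (Ico m n) fun i => -p ^ (i + 1)
    _ ≤ Real.exp (‖p‖ ^ m / (1 - ‖p‖)) - 1 := by gcongr

lemma norm_eulerSegment_le (hp : ‖p‖ < 1) (m n : ℕ) :
    ‖eulerSegment p m n‖ ≤ Real.exp (1 / (1 - ‖p‖)) := by
  have hle : Real.exp (‖p‖ ^ m / (1 - ‖p‖)) ≤ Real.exp (1 / (1 - ‖p‖)) := by
    have : 0 < 1 - ‖p‖ := sub_pos.mpr hp
    gcongr
    exact pow_le_one₀ (norm_nonneg p) hp.le
  have htri := norm_le_norm_sub_add (eulerSegment p m n) 1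
  rw [norm_one] at htri
  linarith [norm_eulerSegment_sub_one_le hp m n]

lemma tendsto_eulerSegment {ι : Type*} {l : Filter ι} (hp : ‖p‖ < 1) {m : ι → ℕ}
    (hm : Tendsto m l atTop) (n : ι → ℕ) :
    Tendsto (fun i => eulerSegment p (m i) (n i)) l (𝓝 1) := by
  rw [tendsto_iff_norm_sub_tendsto_zero]
  refine squeeze_zero (fun _ => norm_nonneg _) (fun i => norm_eulerSegment_sub_one_le hp _ _) ?_
  have hpow : Tendsto (fun i => ‖p‖ ^ m i / (1 - ‖p‖)) l (𝓝 0) := by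
    simpa only [zero_div, Function.comp_apply] using
      ((tendsto_pow_atTop_nhds_zero_of_lt_one (norm_nonneg p) hp).comp hm).div_const (1 - ‖p‖)
  simpa using ((Real.continuous_exp.tendsto 0).comp hpow).sub_const 1

end EulerProduct

section ThetaTerm

/-- The triangular number `k(k+1)/2` of an integer `k`, as a natural number. -/
def triangular (k : ℤ) : ℕ := (k * (k + 1) / 2).toNat

lemma two_mul_triangular (k : ℤ) : 2 * (triangular k : ℤ) = k * (k + 1) := by
  have heven : 2 ∣ k * (k + 1) := (Int.even_mul_succ_self k).two_dvd
  have hnonneg : 0 ≤ k * (k + 1) := by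
    rcases le_or_gt 0 k with h | h
    · positivity
    · nlinarith
  unfold triangular
  omega

lemma triangular_neg (k : ℤ) : triangular (-k) = triangular (k - 1) := by
  zify
  linarith [two_mul_triangular (-k), two_mul_triangular (k - 1)]

lemma triangular_eq_triangular_sub_one_add (k : ℤ) :
    (triangular k : ℤ) = triangular (k - 1) + k := by
  linarith [two_mul_triangular k, two_mul_triangular (k - 1)]

lemma triangular_natCast_sub_one (n : ℕ) : triangular (n - 1) = n.choose 2 := by
  induction n with
  | zero => rfl
  | succ n ih =>
    have hstep := triangular_eq_triangular_sub_one_add n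
    rw [Nat.choose_succ_succ' n 1, Nat.choose_one_right, ← ih, Nat.cast_succ, add_sub_cancel_right]
    omega

lemma quadratic_eq_triangular {m a : ℕ} (ham : a ≤ m) (k : ℤ) :
    (m * k ^ 2 + a * k : ℤ) =
      ((m + a) * triangular k + (m - a) * triangular (k - 1) : ℕ) := by
  push_cast [ham]
  linarith [congrArg ((m + a : ℤ) * ·) (two_mul_triangular k),
    congrArg ((m - a : ℤ) * ·) (two_mul_triangular (k - 1))]

lemma quadratic_nonneg {m a : ℕ} (ham : a ≤ m) (k : ℤ) : (0 : ℤ) ≤ m * k ^ 2 + a * k := by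
  rw [quadratic_eq_triangular ham]
  exact Int.natCast_nonneg _

variable {M : Type*} [CommMonoid M]

/-- The `k`-th term `x ^ (k(k+1)/2) * y ^ (k(k-1)/2)` of Ramanujan's general theta series
`f(x, y)`. -/
def thetaTerm (x y : M) (k : ℤ) : M := x ^ triangular k * y ^ triangular (k - 1)

lemma thetaTerm_neg (x y : M) (k : ℤ) : thetaTerm x y (-k) = thetaTerm y x k := by
  rw [thetaTerm, thetaTerm, triangular_neg, show -k - 1 = -(k + 1) by ring, triangular_neg,
    add_sub_cancel_right, mul_comm]

lemma thetaTerm_natCast (x y : M) (n : ℕ) :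
    thetaTerm x y n = (x * y) ^ n.choose 2 * x ^ n := by
  have htri : triangular n = n.choose 2 + n := by
    zify
    rw [triangular_eq_triangular_sub_one_add, triangular_natCast_sub_one]
  rw [thetaTerm, htri, triangular_natCast_sub_one, pow_add, mul_pow, mul_right_comm]

lemma thetaTerm_mul_pow (x y : M) (m j : ℕ) :
    thetaTerm x y (m + 1 - j) * (x * y) ^ j = x * (x * y) ^ m * thetaTerm x y (m - j) := by
  have hx : triangular (m + 1 - j) + j = 1 + m + triangular (m - j) := by
    have h := triangular_eq_triangular_sub_one_add (m + 1 - j)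
    rw [show (m + 1 - j - 1 : ℤ) = m - j by ring] at h
    omega
  have hy : triangular (m + 1 - j - 1) + j = m + triangular (m - j - 1) := by
    have h := triangular_eq_triangular_sub_one_add (m - j)
    rw [show (m + 1 - j - 1 : ℤ) = m - j by ring]
    omega
  calc thetaTerm x y (m + 1 - j) * (x * y) ^ j
      = x ^ (triangular (m + 1 - j) + j) * y ^ (triangular (m + 1 - j - 1) + j) := by
        rw [thetaTerm, mul_pow, pow_add, pow_add, mul_mul_mul_comm]
    _ = x * (x * y) ^ m * thetaTerm x y (m - j) := by
        rw [hx, hy, thetaTerm, mul_pow, pow_add, pow_add, pow_add, pow_one, mul_mul_mul_comm,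
          mul_assoc x]

theorem prod_mul_prod_eq_sum_gaussBinom_mul_thetaTerm {R : Type*} [CommSemiring R] (x y : R)
    (m n : ℕ) :
    (∏ i ∈ range m, (1 + x * (x * y) ^ i)) * ∏ i ∈ range n, (1 + y * (x * y) ^ i) =
      ∑ j ∈ range (m + n + 1), gaussBinom (x * y) (m + n) j * thetaTerm x y (m - j) := by
  induction m with
  | zero =>
    simp only [range_zero, prod_empty, one_mul, zero_add, Nat.cast_zero, zero_sub, thetaTerm_neg,
      thetaTerm_natCast, mul_comm y x, prod_one_add_mul_pow_eq_sum_gaussBinom]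
  | succ m ih =>
    rw [prod_range_succ, mul_right_comm, ih, show m + 1 + n = m + n + 1 by ring,
      sum_gaussBinom_succ_mul, mul_one_add, sum_mul]
    congr 1 <;> refine sum_congr rfl fun j _ => ?_
    · rw [Nat.cast_succ, Nat.cast_succ, add_sub_add_right_eq_sub]
    · rw [Nat.cast_succ, mul_assoc, mul_comm (thetaTerm x y _), ← thetaTerm_mul_pow]
      ring

lemma summable_norm_thetaTerm {R : Type*} [NormedCommRing R] {x y : R} (h : ‖x * y‖ < 1) :
    Summable fun k : ℤ => ‖thetaTerm x y k‖ := by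
  have hnat : ∀ {x y : R}, ‖x * y‖ < 1 → Summable fun n : ℕ => ‖thetaTerm x y n‖ := by
    intro x y h
    have hratio (n : ℕ) : thetaTerm x y (n + 1 : ℕ) = (x * y) ^ n * x * thetaTerm x y n := by
      rw [thetaTerm_natCast, thetaTerm_natCast, Nat.choose_succ_succ' n 1, Nat.choose_one_right]
      ring
    have hlim : Tendsto (fun n : ℕ => ‖(x * y) ^ n * x‖) atTop (𝓝 0) := by
      simpa using ((tendsto_pow_atTop_nhds_zero_of_norm_lt_one h).mul_const x).norm
    refine summable_of_ratio_norm_eventually_le one_half_lt_one ?_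
    filter_upwards [hlim.eventually_le_const one_half_pos] with n hn
    rw [hratio, norm_norm, norm_norm]
    exact (norm_mul_le _ _).trans (by gcongr)
  refine .of_nat_of_neg (hnat h) ?_
  simp only [thetaTerm_neg]
  exact hnat (mul_comm x y ▸ h)

end ThetaTerm

section TripleProduct

variable {R : Type*}

/-- The coefficient `(p; p)_{2N} [2N, N + k]_p` of `thetaTerm x y k` in the expansion of the finite
product `(p; p)_{2N} (-x; p)_N (-y; p)_N`, where `p = x * y`, written without Gaussian binomials. -/
def thetaWeight [CommRing R] (p : R) (N : ℕ) (k : ℤ) : R :=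
  if k.natAbs ≤ N then
    eulerSegment p (N - k).toNat (N + N) * eulerSegment p (N + k).toNat (N + N)
  else 0

theorem eulerSegment_mul_prod_mul_prod_eq_tsum [CommRing R] [TopologicalSpace R] (x y : R)
    (N : ℕ) :
    eulerSegment (x * y) 0 (N + N) *
        ((∏ i ∈ range N, (1 + x * (x * y) ^ i)) * ∏ i ∈ range N, (1 + y * (x * y) ^ i)) =
      ∑' k : ℤ, thetaWeight (x * y) N k * thetaTerm x y k := by
  have hsupport : ∀ k ∉ Icc (-N : ℤ) N, thetaWeight (x * y) N k * thetaTerm x y k = 0 :=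
    fun k hk => by
      rw [mem_Icc] at hk
      rw [thetaWeight, if_neg (by omega), zero_mul]
  rw [prod_mul_prod_eq_sum_gaussBinom_mul_thetaTerm, mul_sum, tsum_eq_sum hsupport]
  refine sum_nbij' (fun j => (N : ℤ) - j) (fun k => (N - k).toNat) ?_ ?_ ?_ ?_ fun j hj => ?_
  · intro j hj
    rw [mem_range] at hj
    rw [mem_Icc]
    omega
  · intro k hk
    rw [mem_Icc] at hk
    rw [mem_range]
    omega
  · intro j _
    omega
  · intro k hk
    rw [mem_Icc] at hk
    omega
  · rw [mem_range] at hj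
    obtain ⟨i, hi⟩ : ∃ i, N + N = j + i := Nat.exists_eq_add_of_le (by omega)
    rw [thetaWeight, if_pos (by omega), ← mul_assoc, hi,
      eulerSegment_zero_add_mul_gaussBinom, show (N - (N - j) : ℤ).toNat = j by omega,
      show (N + (N - j) : ℤ).toNat = i by omega]

variable [NormedCommRing R] [NormOneClass R]

lemma norm_thetaWeight_le {p : R} (hp : ‖p‖ < 1) (N : ℕ) (k : ℤ) :
    ‖thetaWeight p N k‖ ≤ Real.exp (1 / (1 - ‖p‖)) * Real.exp (1 / (1 - ‖p‖)) := by
  unfold thetaWeight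
  split_ifs
  · exact norm_mul_le_of_le (norm_eulerSegment_le hp _ _) (norm_eulerSegment_le hp _ _)
  · rw [norm_zero]
    positivity

lemma tendsto_thetaWeight {p : R} (hp : ‖p‖ < 1) (k : ℤ) :
    Tendsto (fun N => thetaWeight p N k) atTop (𝓝 1) := by
  have hindex (l : ℤ) : Tendsto (fun N : ℕ => (N + l).toNat) atTop atTop :=
    tendsto_atTop.mpr fun b => by
      filter_upwards [eventually_ge_atTop (b + l.natAbs)] with N hN
      omega
  have hlim := (tendsto_eulerSegment hp (hindex (-k)) fun N => N + N).mul
    (tendsto_eulerSegment hp (hindex k) fun N => N + N)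
  rw [one_mul] at hlim
  refine hlim.congr' ?_
  filter_upwards [eventually_ge_atTop k.natAbs] with N hN
  rw [thetaWeight, if_pos hN, sub_eq_add_neg]

variable [CompleteSpace R]

lemma multipliable_one_add_mul_pow (z : R) {p : R} (hp : ‖p‖ < 1) :
    Multipliable fun n : ℕ => 1 + z * p ^ n := by
  refine multipliable_one_add_of_summable <|
    ((summable_geometric_of_lt_one (norm_nonneg p) hp).mul_left ‖z‖).of_nonneg_of_le
      (fun _ => norm_nonneg _) fun n => ?_
  grw [norm_mul_le, norm_pow_le]

theorem tsum_thetaTerm_eq_tprod {x y : R} (hp : ‖x * y‖ < 1) :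
    ∑' k : ℤ, thetaTerm x y k =
      ∏' n : ℕ, (1 - (x * y) ^ (n + 1)) * (1 + x * (x * y) ^ n) * (1 + y * (x * y) ^ n) := by
  have hmx := multipliable_one_add_mul_pow x hp
  have hmy := multipliable_one_add_mul_pow y hp
  have hme : Multipliable fun n : ℕ => 1 - (x * y) ^ (n + 1) := by
    simpa only [neg_mul, ← pow_succ', ← sub_eq_add_neg] using
      multipliable_one_add_mul_pow (-(x * y)) hp
  have hseries : Tendsto (fun N => ∑' k : ℤ, thetaWeight (x * y) N k * thetaTerm x y k) atTop
      (𝓝 (∑' k : ℤ, thetaTerm x y k)) := by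
    refine tendsto_tsum_of_dominated_convergence ((summable_norm_thetaTerm hp).mul_left _)
      (fun k => ?_) (.of_forall fun N k =>
        norm_mul_le_of_le (norm_thetaWeight_le hp N k) le_rfl)
    simpa only [one_mul] using (tendsto_thetaWeight hp k).mul_const (thetaTerm x y k)
  have heuler : Tendsto (fun N => eulerSegment (x * y) 0 (N + N)) atTop
      (𝓝 (∏' n : ℕ, (1 - (x * y) ^ (n + 1)))) := by
    simp only [eulerSegment, Nat.Ico_zero_eq_range]
    exact hme.tendsto_prod_tprod_nat.comp (tendsto_id.atTop_add_atTop tendsto_id)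
  have hproducts := heuler.mul (hmx.tendsto_prod_tprod_nat.mul hmy.tendsto_prod_tprod_nat)
  simp only [eulerSegment_mul_prod_mul_prod_eq_tsum] at hproducts
  rw [(hme.mul hmx).tprod_mul hmy, hme.tprod_mul hmx, mul_assoc]
  exact tendsto_nhds_unique hseries hproducts

theorem tsum_pow_quadratic_eq_tprod {m a : ℕ} (hm : 0 < m) (ham : a ≤ m) {q : R} (hq : ‖q‖ < 1) :
    ∑' k : ℤ, q ^ (m * k ^ 2 + a * k).toNat =
      ∏' n : ℕ, (1 - q ^ (2 * m * n + 2 * m)) * (1 + q ^ (2 * m * n + m + a)) *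
        (1 + q ^ (2 * m * n + m - a)) := by
  have hxy : q ^ (m + a) * q ^ (m - a) = q ^ (2 * m) := by
    rw [← pow_add]
    congr 1
    omega
  have hnorm : ‖q ^ (m + a) * q ^ (m - a)‖ < 1 := by
    rw [hxy]
    exact (norm_pow_le q _).trans_lt (pow_lt_one₀ (norm_nonneg q) hq (by omega))
  have hterm (k : ℤ) : thetaTerm (q ^ (m + a)) (q ^ (m - a)) k = q ^ (m * k ^ 2 + a * k).toNat := by
    rw [quadratic_eq_triangular ham, Int.toNat_natCast, thetaTerm, ← pow_mul, ← pow_mul, ← pow_add]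
  rw [← tsum_congr hterm, tsum_thetaTerm_eq_tprod hnorm, hxy]
  refine tprod_congr fun n => ?_
  rw [← pow_mul, ← pow_mul, ← pow_add, ← pow_add, mul_add_one, add_comm (m + a), ← add_assoc,
    add_comm (m - a), Nat.add_sub_assoc ham]

end TripleProduct

section SquareShift

lemma eight_dvd_sub_or_neg_sub {a : ℕ} (ha : 0 < a) (ha4 : a < 4) {j t : ℤ}
    (h : 16 * j + (a : ℤ) ^ 2 = t ^ 2) : (8 : ℤ) ∣ t - a ∨ (8 : ℤ) ∣ -t - a := by
  obtain ⟨s, r, hr0, hr8, rfl⟩ : ∃ s r : ℤ, 0 ≤ r ∧ r < 8 ∧ t = 8 * s + r :=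
    ⟨t / 8, t % 8, by omega, by omega, by omega⟩
  have hdvd : (16 : ℤ) ∣ r ^ 2 - (a : ℤ) ^ 2 := ⟨j - 4 * s ^ 2 - s * r, by linarith⟩
  interval_cases a <;> interval_cases r <;> omega

lemma setOf_exists_sq_eq_range {a : ℕ} (ha : 0 < a) (ha4 : a < 4) :
    {j : ℕ | ∃ t : ℤ, 16 * (j : ℤ) + (a : ℤ) ^ 2 = t ^ 2} =
      Set.range fun k : ℤ => ((4 : ℕ) * k ^ 2 + a * k).toNat := by
  ext j
  constructor
  · rintro ⟨t, ht⟩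
    obtain ⟨t, k, htk, ht⟩ : ∃ t k : ℤ, t - a = 8 * k ∧ 16 * (j : ℤ) + (a : ℤ) ^ 2 = t ^ 2 := by
      rcases eight_dvd_sub_or_neg_sub ha ha4 ht with ⟨k, hk⟩ | ⟨k, hk⟩
      · exact ⟨t, k, hk, ht⟩
      · exact ⟨-t, k, hk, by rw [neg_sq, ht]⟩
    obtain rfl : t = 8 * k + a := by linarith
    have hj : ((4 : ℕ) * k ^ 2 + a * k : ℤ) = j := by push_cast; linarith
    exact ⟨k, by simp only [hj, Int.toNat_natCast]⟩
  · rintro ⟨k, rfl⟩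
    refine ⟨8 * k + a, ?_⟩
    rw [Int.toNat_of_nonneg (quadratic_nonneg ha4.le k)]
    push_cast
    ring

lemma injective_toNat_quadratic {m a : ℕ} (ham : a ≤ m) (hma : ¬ m ∣ a) :
    Function.Injective fun k : ℤ => (m * k ^ 2 + a * k).toNat := by
  intro k l hkl
  have heq : (m * k ^ 2 + a * k : ℤ) = m * l ^ 2 + a * l := by
    rw [← Int.toNat_of_nonneg (quadratic_nonneg ham k),
      ← Int.toNat_of_nonneg (quadratic_nonneg ham l)]
    exact congrArg Nat.cast hkl
  have hfactor : (k - l) * (m * (k + l) + a) = 0 := by linarith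
  rcases mul_eq_zero.mp hfactor with h | h
  · exact sub_eq_zero.mp h
  · refine absurd ?_ hma
    exact Int.natCast_dvd_natCast.mp ⟨-(k + l), by linarith⟩

end SquareShift

theorem stmt9_general {R : Type*} [NormedCommRing R] [NormOneClass R] [CompleteSpace R] {a : ℕ}
    (ha : 0 < a) (ha4 : a < 4) {q : R} (hq : ‖q‖ < 1) :
    (∑' j : {j : ℕ // ∃ t : ℤ, 16 * (j : ℤ) + (a : ℤ) ^ 2 = t ^ 2}, q ^ (j : ℕ)) =
    ∏' n : ℕ, ((1 - q ^ (8 * n + 8)) * (1 + q ^ (8 * n + 4 + a)) * (1 + q ^ (8 * n + 4 - a))) := by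
  have hinj := injective_toNat_quadratic ha4.le (Nat.not_dvd_of_pos_of_lt ha ha4)
  calc ∑' j : {j : ℕ // ∃ t : ℤ, 16 * (j : ℤ) + (a : ℤ) ^ 2 = t ^ 2}, q ^ (j : ℕ)
      = ∑' j : Set.range fun k : ℤ => ((4 : ℕ) * k ^ 2 + a * k).toNat, q ^ (j : ℕ) := by
        rw [← setOf_exists_sq_eq_range ha ha4]
        rfl
    _ = ∑' k : ℤ, q ^ ((4 : ℕ) * k ^ 2 + a * k).toNat := tsum_range (q ^ ·) hinj
    _ = _ := tsum_pow_quadratic_eq_tprod four_pos ha4.le hq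

/-- For `a ∈ {1,3}` and `|q| < 1`:
`Σ_{j ∈ S_a} q^j = ∏_{n=1}^∞ (1 − q^{8n})(1 + q^{8n−4+a})(1 + q^{8n−4−a})`,
where `S_a` is the set of non-negative integers `j` with `16j + a²` a perfect square.
(The product below is indexed by `n : ℕ` with `n + 1` playing the role of `n ≥ 1`,
so the factors are `(1 − q^{8n+8})(1 + q^{8n+4+a})(1 + q^{8n+4−a})`.) -/
theorem stmt9 (a : ℕ) (ha : a = 1 ∨ a = 3) (q : ℂ) (hq : ‖q‖ < 1) :
    (∑' j : {j : ℕ // ∃ t : ℤ, 16 * (j : ℤ) + (a : ℤ) ^ 2 = t ^ 2}, q ^ (j : ℕ)) =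
    ∏' n : ℕ, ((1 - q ^ (8 * n + 8)) * (1 + q ^ (8 * n + 4 + a)) * (1 + q ^ (8 * n + 4 - a))) := by
  exact stmt9_general (by omega) (by omega) hq
end

section
/- Let R and S be integers with R ≥ 2, 1 ≤ S < R and 2S ≠ R, and let k ≥ 1. Then for every integer n ≥ 0, Σ_{j=k}^{∞} ( p_{±S,R}(n − j(3j−1)R/2 − 3jS) − p_{±S,R}(n − j(3j−1)R/2 − 3jS − S − jR) ) ≥ 0. (Equivalently, the series T_+(q,k,S,R) = (1/((q^S, q^{R−S}; q^R)_∞)) Σ_{n=k}^{∞} q^{n(3n−1)R/2+3nS}(1 − q^{S+nR}) has non-negative coefficients.) -/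
/-- `pp R S m` is the number of partitions of `m` all of whose parts are congruent
to `S` or `R−S` mod `R`, with `pp R S m = 0` for `m < 0`. A partition is a multiset
of positive parts. -/
noncomputable def pp (R S : ℕ) (m : ℤ) : ℕ :=
  Nat.card {s : Multiset ℕ // (s.sum : ℤ) = m ∧
    ∀ a ∈ s, 0 < a ∧ (a % R = S % R ∨ a % R = (R - S) % R)}

/-! The shift `S + jR` is itself an admissible part, so adjoining it to a partition embeds the
partitions counted by the subtracted term into those counted by the other one: the series is
non-negative term by term. It is a finite sum because its exponents tend to `-∞` with `j`. -/

open Filter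

/-- The partitions of `m` with parts in `A`, encoded as multisets; `m : ℤ` so that shifted arguments
may be negative. If `0 ∈ A` the set may be infinite, and then its `ncard` is `0`. -/
def partitionsIn (A : Set ℕ) (m : ℤ) : Set (Multiset ℕ) :=
  {s | (s.sum : ℤ) = m ∧ ∀ a ∈ s, a ∈ A}

section partitionsIn

variable {A : Set ℕ}

theorem finite_partitionsIn (hA : 0 ∉ A) (m : ℤ) : (partitionsIn A m).Finite := by
  refine (Set.finite_range (Nat.Partition.parts (n := m.toNat))).subset ?_
  rintro s ⟨hsum, hs⟩
  have parts_pos {a : ℕ} (ha : a ∈ s) : 0 < a :=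
    Nat.pos_of_ne_zero fun h => hA (h ▸ hs a ha)
  exact ⟨⟨s, parts_pos, by omega⟩, rfl⟩

theorem partitionsIn_eq_empty_of_neg {m : ℤ} (hm : m < 0) : partitionsIn A m = ∅ :=
  Set.eq_empty_of_forall_notMem fun _ hs => by have := hs.1; omega

theorem cons_mem_partitionsIn {a : ℕ} (ha : a ∈ A) {m : ℤ} {s : Multiset ℕ}
    (hs : s ∈ partitionsIn A (m - a)) : a ::ₘ s ∈ partitionsIn A m := by
  refine ⟨?_, Multiset.forall_mem_cons.2 ⟨ha, hs.2⟩⟩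
  rw [Multiset.sum_cons, Nat.cast_add, hs.1, add_sub_cancel]

theorem ncard_partitionsIn_sub_le (hA : 0 ∉ A) {a : ℕ} (ha : a ∈ A) (m : ℤ) :
    (partitionsIn A (m - a)).ncard ≤ (partitionsIn A m).ncard :=
  Set.ncard_le_ncard_of_injOn (a ::ₘ ·) (fun _ => cons_mem_partitionsIn ha)
    (fun _ _ _ _ => (Multiset.cons_inj_right a).1) (finite_partitionsIn hA m)

end partitionsIn

/-- The parts admitted by `pp R S`: the positive integers congruent to `±S` modulo `R`. The
subtraction in `R - S` is that of `ℕ`, as in `pp`, so `S ≤ R` is intended. -/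
def partsCongr (R S : ℕ) : Set ℕ :=
  {a | 0 < a ∧ (a % R = S % R ∨ a % R = (R - S) % R)}

theorem pp_eq_ncard (R S : ℕ) (m : ℤ) : pp R S m = (partitionsIn (partsCongr R S) m).ncard :=
  Nat.card_coe_set_eq (partitionsIn (partsCongr R S) m)

theorem zero_notMem_partsCongr (R S : ℕ) : 0 ∉ partsCongr R S :=
  fun h => h.1.false

theorem add_mul_mem_partsCongr (R : ℕ) {S : ℕ} (hS : 1 ≤ S) (j : ℕ) : S + j * R ∈ partsCongr R S :=
  ⟨by omega, Or.inl (Nat.add_mul_mod_self_right S j R)⟩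

theorem le_pentagonal_exponent (R : ℕ) {S : ℕ} (hS : 1 ≤ S) (j : ℕ) :
    (j : ℤ) ≤ (j : ℤ) * (3 * (j : ℤ) - 1) * R / 2 + 3 * (j : ℤ) * S := by
  have pentagonal_nonneg : 0 ≤ (j : ℤ) * (3 * j - 1) := by
    rcases j.eq_zero_or_pos with rfl | hj
    · simp
    · exact mul_nonneg (by omega) (by omega)
  have quadratic_nonneg : 0 ≤ (j : ℤ) * (3 * j - 1) * R / 2 := by positivity
  have linear_bound : (j : ℤ) ≤ j * S := le_mul_of_one_le_right (by omega) (by omega)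
  linarith

theorem tendsto_sub_pentagonal_exponent (R : ℕ) {S : ℕ} (hS : 1 ≤ S) (n : ℤ) :
    Tendsto (fun j : ℕ => n - ((j : ℤ) * (3 * (j : ℤ) - 1) * R / 2 + 3 * (j : ℤ) * S))
      cofinite atBot := by
  rw [Nat.cofinite_eq_atTop]
  exact tendsto_atBot_add_const_left _ n <| tendsto_neg_atTop_atBot.comp <|
    tendsto_atTop_mono (le_pentagonal_exponent R hS) tendsto_natCast_atTop_atTop

theorem stmt11_general {A : Set ℕ} (hA : 0 ∉ A) {ι : Type*} {a : ι → ℕ} (ha : ∀ i, a i ∈ A)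
    {e : ι → ℤ} (he : Tendsto e cofinite atBot) :
    Summable (fun i => ((partitionsIn A (e i)).ncard - (partitionsIn A (e i - a i)).ncard : ℤ)) ∧
      0 ≤ ∑' i, ((partitionsIn A (e i)).ncard - (partitionsIn A (e i - a i)).ncard : ℤ) := by
  have eventually_neg : ∀ᶠ i in cofinite, e i < 0 := he.eventually_lt_atBot 0
  refine ⟨summable_of_hasFiniteSupport (eventually_neg.mono fun i hi => ?_),
    tsum_nonneg fun i => sub_nonneg.2 (mod_cast ncard_partitionsIn_sub_le hA (ha i) (e i))⟩
  have hi' : e i - a i < 0 := by omega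
  simp [partitionsIn_eq_empty_of_neg hi, partitionsIn_eq_empty_of_neg hi']

/-- The series `T_+(q,k,S,R)` has non-negative coefficients: for `n ≥ 0`,
`Σ_{j=k}^∞ (p_{±S,R}(n − j(3j−1)R/2 − 3jS) − p_{±S,R}(n − j(3j−1)R/2 − 3jS − S − jR)) ≥ 0`. -/
theorem stmt11 (R S : ℕ) (hR : 2 ≤ R) (hS : 1 ≤ S) (hSR : S < R) (h2S : 2 * S ≠ R)
    (k : ℕ) (hk : 1 ≤ k) (n : ℤ) (hn : 0 ≤ n) :
    0 ≤ ∑' j : {j : ℕ // k ≤ j},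
        ((pp R S (n - ((j.1 : ℤ) * (3 * (j.1 : ℤ) - 1) * R / 2 + 3 * (j.1 : ℤ) * S)) : ℤ) -
         (pp R S (n - ((j.1 : ℤ) * (3 * (j.1 : ℤ) - 1) * R / 2 + 3 * (j.1 : ℤ) * S)
            - S - (j.1 : ℤ) * R) : ℤ)) := by
  have exponents_tendsto :=
    (tendsto_sub_pentagonal_exponent R hS n).comp
      (Subtype.val_injective (p := (k ≤ ·))).tendsto_cofinite
  simpa only [pp_eq_ncard, ← sub_sub, Nat.cast_add, Nat.cast_mul, Function.comp_apply] using
    (stmt11_general (zero_notMem_partsCongr R S)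
      (fun j : {j // k ≤ j} => add_mul_mem_partsCongr R hS j) exponents_tendsto).2
end

section
/- Let R and S be integers with R ≥ 2, 1 ≤ S < R and 2S ≠ R, and let k ≥ 1. Then for every integer n ≥ 0, Σ_{j=k}^{∞} ( p_{±S,R}(n − j(3j+1)R/2 + 3jS) − p_{±S,R}(n − j(3j+1)R/2 + 3jS − S + jR) ) ≤ 0. (Equivalently, the series T_−(q,k,S,R) = (1/((q^S, q^{R−S}; q^R)_∞)) Σ_{n=k}^{∞} q^{n(3n+1)R/2−3nS}(1 − q^{S−nR}) has non-positive coefficients.) -/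
/-!
Factoring `1 - q ^ (S - jR) = -q ^ (S - jR) * (1 - q ^ (jR - S))`, each term of the series is minus
a power of `q` times `(1 - q ^ (jR - S)) / (q ^ S, q ^ (R - S); q ^ R)_∞`. For `j ≥ 1` the exponent
`jR - S` is an admissible part, so its factor cancels from the infinite product and what remains
has non-negative coefficients. Combinatorially: adjoining a part `jR - S` injects the partitions
of `m` into those of `m + (jR - S)`, so the series is non-positive term by term.
-/

/-- The partitions of the integer `m` all of whose parts satisfy `P`, as multisets of naturals; they
are honest partitions only when `P 0` fails. Unlike `Nat.Partition.restricted`, the total `m` is an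
integer, so that there are none for `m < 0`. -/
def restrictedPartitions (P : ℕ → Prop) (m : ℤ) : Set (Multiset ℕ) :=
  {s | (s.sum : ℤ) = m ∧ ∀ a ∈ s, P a}

section RestrictedPartitions

variable {P : ℕ → Prop} {c : ℕ}

theorem finite_restrictedPartitions (hP : ¬P 0) (m : ℤ) : (restrictedPartitions P m).Finite := by
  refine (Set.finite_range (Nat.Partition.parts (n := m.toNat))).subset ?_
  rintro s ⟨hsum, hparts⟩
  have hpos : ∀ {a}, a ∈ s → 0 < a := fun ha =>
    Nat.pos_of_ne_zero fun h0 => hP (h0 ▸ hparts _ ha)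
  exact ⟨⟨s, hpos, by omega⟩, rfl⟩

theorem cons_mem_restrictedPartitions {s : Multiset ℕ} {m : ℤ} (hc : P c)
    (hs : s ∈ restrictedPartitions P m) : c ::ₘ s ∈ restrictedPartitions P (m + c) := by
  obtain ⟨hsum, hparts⟩ := hs
  refine ⟨?_, Multiset.forall_mem_cons.2 ⟨hc, hparts⟩⟩
  rw [Multiset.sum_cons, Nat.cast_add, hsum, add_comm]

theorem ncard_restrictedPartitions_le_add (hP : ¬P 0) (hc : P c) (m : ℤ) :
    (restrictedPartitions P m).ncard ≤ (restrictedPartitions P (m + c)).ncard :=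
  Set.ncard_le_ncard_of_injOn (c ::ₘ ·) (fun _ => cons_mem_restrictedPartitions hc)
    (fun _ _ _ _ => (Multiset.cons_inj_right c).1) (finite_restrictedPartitions hP _)

end RestrictedPartitions

theorem pp_eq_ncard_restrictedPartitions (R S : ℕ) (m : ℤ) :
    pp R S m = (restrictedPartitions
      (fun a => 0 < a ∧ (a % R = S % R ∨ a % R = (R - S) % R)) m).ncard :=
  Nat.card_coe_set_eq _

theorem pp_le_pp_add {R S c : ℕ} (hc : 0 < c) (hcR : c % R = S % R ∨ c % R = (R - S) % R) (m : ℤ) :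
    pp R S m ≤ pp R S (m + c) := by
  simp only [pp_eq_ncard_restrictedPartitions]
  exact ncard_restrictedPartitions_le_add (fun h => h.1.false) ⟨hc, hcR⟩ m

theorem pp_le_pp_sub_add_mul {R S j : ℕ} (hSR : S < R) (hj : 1 ≤ j) (m : ℤ) :
    pp R S m ≤ pp R S (m - S + j * R) := by
  obtain ⟨i, rfl⟩ := Nat.exists_eq_add_of_le' hj
  have hpart : (R - S + R * i) % R = (R - S) % R := Nat.add_mul_mod_self_left _ _ _
  have hshift : m - S + (i + 1 : ℕ) * R = m + (R - S + R * i : ℕ) := by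
    push_cast [Nat.cast_sub hSR.le]
    ring
  rw [hshift]
  exact pp_le_pp_add (by omega) (Or.inr hpart) m

theorem stmt12_general {R S k : ℕ} (hSR : S < R) (hk : 1 ≤ k) (n : ℤ) :
    (∑' j : {j : ℕ // k ≤ j},
        ((pp R S (n - ((j.1 : ℤ) * (3 * (j.1 : ℤ) + 1) * R / 2) + 3 * (j.1 : ℤ) * S) : ℤ) -
         (pp R S (n - ((j.1 : ℤ) * (3 * (j.1 : ℤ) + 1) * R / 2) + 3 * (j.1 : ℤ) * S
            - S + (j.1 : ℤ) * R) : ℤ))) ≤ 0 :=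
  tsum_nonpos fun j =>
    sub_nonpos.2 <| Nat.cast_le.2 <| pp_le_pp_sub_add_mul hSR (hk.trans j.2) _

/-- The series `T_−(q,k,S,R)` has non-positive coefficients: for `n ≥ 0`,
`Σ_{j=k}^∞ (p_{±S,R}(n − j(3j+1)R/2 + 3jS) − p_{±S,R}(n − j(3j+1)R/2 + 3jS − S + jR)) ≤ 0`. -/
theorem stmt12 (R S : ℕ) (hR : 2 ≤ R) (hS : 1 ≤ S) (hSR : S < R) (h2S : 2 * S ≠ R)
    (k : ℕ) (hk : 1 ≤ k) (n : ℤ) (hn : 0 ≤ n) :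
    (∑' j : {j : ℕ // k ≤ j},
        ((pp R S (n - ((j.1 : ℤ) * (3 * (j.1 : ℤ) + 1) * R / 2) + 3 * (j.1 : ℤ) * S) : ℤ) -
         (pp R S (n - ((j.1 : ℤ) * (3 * (j.1 : ℤ) + 1) * R / 2) + 3 * (j.1 : ℤ) * S
            - S + (j.1 : ℤ) * R) : ℤ))) ≤ 0 :=
  stmt12_general hSR hk n
end

section
/- For every integer n ≥ 0, b_3(n) − b_3(n−1) − ρ_3(n) ≥ 0. -/
/-- `b3 m` is the number of 3-regular partitions of `m` (no part divisible by 3),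
with `b3 m = 0` for `m < 0`. A partition is a multiset of positive parts. -/
noncomputable def b3 (m : ℤ) : ℕ :=
  Nat.card {s : Multiset ℕ // (s.sum : ℤ) = m ∧ ∀ a ∈ s, 0 < a ∧ ¬ 3 ∣ a}

/-!
Adding a part `1` embeds the 3-regular partitions of `n - 1` in those of `n`, and what is left over
are the 3-regular partitions of `n` without the part `1`. So `b3 n - b3 (n - 1)` counts the latter,
and it remains to compare this count with `ρ n ≤ 1`. Every `n ≥ 0` other than `1` and `3` is a sum
of `2`s and `5`s, so there the count is at least `1`; at the two exceptions `ρ` is `0` and `-1`.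
-/

/-- The partitions of `m` with all parts in `S`, as multisets; they are partitions in the usual
sense only when `0 ∉ S`. As for `b3`, `m` is an integer, and there are none for `m < 0`. -/
def partitionsInto (S : Set ℕ) (m : ℤ) : Set (Multiset ℕ) :=
  {s | (s.sum : ℤ) = m ∧ ∀ a ∈ s, a ∈ S}

/-- The parts allowed in an `ℓ`-regular partition. -/
def regularParts (ℓ : ℕ) : Set ℕ :=
  {a | 0 < a ∧ ¬ ℓ ∣ a}

section PartitionsInto

variable {S T : Set ℕ} {a b : ℕ} {m : ℤ}

theorem partitionsInto_mono (h : S ⊆ T) : partitionsInto S m ⊆ partitionsInto T m :=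
  fun _ hs => ⟨hs.1, fun a ha => h (hs.2 a ha)⟩

theorem finite_partitionsInto (hS : 0 ∉ S) : (partitionsInto S m).Finite := by
  refine (Set.finite_range (Nat.Partition.parts (n := m.toNat))).subset fun s hs => ?_
  have parts_pos : ∀ {a}, a ∈ s → 0 < a := fun {a} ha =>
    Nat.pos_of_ne_zero fun h => hS (h ▸ hs.2 a ha)
  have sum_eq : s.sum = m.toNat := by
    have := hs.1
    omega
  exact ⟨⟨s, parts_pos, sum_eq⟩, rfl⟩

theorem cons_mem_partitionsInto_iff {s : Multiset ℕ} :
    a ::ₘ s ∈ partitionsInto S m ↔ a ∈ S ∧ s ∈ partitionsInto S (m - a) := by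
  simp only [partitionsInto, Set.mem_ofPred_eq, Multiset.sum_cons, Nat.cast_add,
    Multiset.forall_mem_cons, eq_sub_iff_add_eq']
  exact and_left_comm

theorem mem_partitionsInto_sdiff_singleton_iff {s : Multiset ℕ} :
    s ∈ partitionsInto (S \ {a}) m ↔ s ∈ partitionsInto S m ∧ a ∉ s := by
  constructor
  · exact fun hs => ⟨partitionsInto_mono Set.sdiff_subset hs, fun ha => (hs.2 a ha).2 rfl⟩
  · rintro ⟨hs, ha⟩
    exact ⟨hs.1, fun b hb => ⟨hs.2 b hb, ne_of_mem_of_not_mem hb ha⟩⟩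

theorem image_cons_union_partitionsInto_sdiff_singleton (ha : a ∈ S) :
    (a ::ₘ ·) '' partitionsInto S (m - a) ∪ partitionsInto (S \ {a}) m = partitionsInto S m := by
  ext s
  constructor
  · rintro (⟨t, ht, rfl⟩ | hs)
    · exact cons_mem_partitionsInto_iff.2 ⟨ha, ht⟩
    · exact (mem_partitionsInto_sdiff_singleton_iff.1 hs).1
  · intro hs
    by_cases has : a ∈ s
    · obtain ⟨t, rfl⟩ := Multiset.exists_cons_of_mem has
      exact .inl ⟨t, (cons_mem_partitionsInto_iff.1 hs).2, rfl⟩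
    · exact .inr (mem_partitionsInto_sdiff_singleton_iff.2 ⟨hs, has⟩)

theorem disjoint_image_cons_partitionsInto_sdiff_singleton (A : Set (Multiset ℕ)) :
    Disjoint ((a ::ₘ ·) '' A) (partitionsInto (S \ {a}) m) := by
  rw [Set.disjoint_left]
  rintro _ ⟨t, -, rfl⟩ hs
  exact (mem_partitionsInto_sdiff_singleton_iff.1 hs).2 (Multiset.mem_cons_self a t)

theorem ncard_partitionsInto_eq_add (hS : 0 ∉ S) (ha : a ∈ S) :
    (partitionsInto S m).ncard =
      (partitionsInto S (m - a)).ncard + (partitionsInto (S \ {a}) m).ncard := by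
  rw [← image_cons_union_partitionsInto_sdiff_singleton ha,
    Set.ncard_union_eq (disjoint_image_cons_partitionsInto_sdiff_singleton _)
      ((finite_partitionsInto hS).image _) (finite_partitionsInto fun h => hS h.1),
    Set.ncard_image_of_injective _ fun _ _ => (Multiset.cons_inj_right a).1]

theorem replicate_add_replicate_mem_partitionsInto_pair (x y : ℕ) :
    Multiset.replicate x a + Multiset.replicate y b ∈
      partitionsInto {a, b} ((x * a + y * b : ℕ) : ℤ) := by
  refine ⟨by simp, fun c hc => ?_⟩
  exact (Multiset.mem_add.1 hc).imp Multiset.eq_of_mem_replicate Multiset.eq_of_mem_replicate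

theorem partitionsInto_two_five_nonempty (hm : 0 ≤ m) (hm1 : m ≠ 1) (hm3 : m ≠ 3) :
    (partitionsInto {2, 5} m).Nonempty := by
  obtain ⟨x, y, rfl⟩ : ∃ x y : ℕ, m = (x * 2 + y * 5 : ℕ) := by
    obtain ⟨k, rfl | rfl⟩ := Int.even_or_odd' m
    · exact ⟨k.toNat, 0, by omega⟩
    · exact ⟨(k - 2).toNat, 1, by omega⟩
  exact ⟨_, replicate_add_replicate_mem_partitionsInto_pair x y⟩

end PartitionsInto

theorem b3_eq_ncard_partitionsInto (m : ℤ) : b3 m = (partitionsInto (regularParts 3) m).ncard :=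
  rfl

theorem b3_eq_add (m : ℤ) :
    b3 m = b3 (m - 1) + (partitionsInto (regularParts 3 \ {1}) m).ncard := by
  simpa only [b3_eq_ncard_partitionsInto, Nat.cast_one] using
    ncard_partitionsInto_eq_add (S := regularParts 3) (a := 1) (m := m)
      (by simp [regularParts]) (by simp [regularParts])

theorem b3_sub_one_lt {m : ℤ} (hm : 0 ≤ m) (hm1 : m ≠ 1) (hm3 : m ≠ 3) : b3 (m - 1) < b3 m := by
  have two_five_subset : {2, 5} ⊆ regularParts 3 \ {1} := by
    simp [Set.insert_subset_iff, regularParts]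
  have without_one_finite : (partitionsInto (regularParts 3 \ {1}) m).Finite :=
    finite_partitionsInto (by simp [regularParts])
  rw [b3_eq_add m, Nat.lt_add_right_iff_pos, Set.ncard_pos without_one_finite]
  exact (partitionsInto_two_five_nonempty hm hm1 hm3).mono (partitionsInto_mono two_five_subset)

theorem le_one_of_eq_neg_one_pow_of_eq_zero {α ι : Type*} {f : ι → α} {e : ι → ℕ} {ρ : α → ℤ}
    (hρ_range : ∀ i, ρ (f i) = (-1) ^ e i) (hρ_zero : ∀ x, (∀ i, x ≠ f i) → ρ x = 0) (x : α) :
    ρ x ≤ 1 := by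
  by_cases hx : ∃ i, x = f i
  · obtain ⟨i, rfl⟩ := hx
    rw [hρ_range]
    rcases neg_one_pow_eq_or ℤ (e i) with h | h <;> simp [h]
  · rw [hρ_zero x (not_exists.1 hx)]
    exact zero_le_one

/-- For every `n ≥ 0`, `b_3(n) − b_3(n−1) − ρ_3(n) ≥ 0`. -/
theorem stmt13
    (ρ : ℤ → ℤ)
    (hρ1 : ∀ i : ℤ, ρ (3 * (i * (3 * i - 1) / 2)) = (-1) ^ i.natAbs)
    (hρ2 : ∀ m : ℤ, (∀ i : ℤ, m ≠ 3 * (i * (3 * i - 1) / 2)) → ρ m = 0)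
    (n : ℤ) (hn : 0 ≤ n) :
    0 ≤ (b3 n : ℤ) - (b3 (n - 1) : ℤ) - ρ n := by
  have b3_mono : b3 (n - 1) ≤ b3 n := (b3_eq_add n).symm ▸ Nat.le_add_right _ _
  rcases eq_or_ne n 1 with rfl | hn1
  · have rho_one : ρ 1 = 0 := hρ2 1 fun i => by omega
    omega
  rcases eq_or_ne n 3 with rfl | hn3
  · have rho_three : ρ 3 = -1 := by simpa using hρ1 1
    omega
  have b3_lt : b3 (n - 1) < b3 n := b3_sub_one_lt hn hn1 hn3
  have rho_le_one : ρ n ≤ 1 := le_one_of_eq_neg_one_pow_of_eq_zero hρ1 hρ2 n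
  omega
end

section
/- For every integer n ≥ 0, b_3(n) − b_3(n−1) − b_3(n−2) + b_3(n−5) + b_3(n−7) − b_3(n−12) − ρ_3(n) ≥ 0. -/
/-!
The combination of values of `b3` is the coefficient of `q ^ n` in `P * G`, where
`P = 1 - q - q ^ 2 + q ^ 5 + q ^ 7 - q ^ 12` and `G = ∏ 1 / (1 - q ^ m)` over the `m` not divisible
by `3`. Dividing `P` only by the factors with `m < 16` leaves a series that begins with
`1 - q ^ 3 - q ^ 6`, has no further negative coefficient, and has all coefficients from index `19`
on at least `3`. The latter claim reduces to a finite computation, since dividing by `1 - q ^ m`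
propagates a lower bound from a window of `m` consecutive coefficients to all later ones.

Let `r m` count the partitions of `m` into parts that are at least `16` and not divisible by `3`.
Taking a part away from a nonempty such partition shows that `r (n - 3)` and `r (n - 6)` are, up to
the term `r 0 = 1`, at most `∑ k ≥ 19, r (n - k)`. Three copies of this sum pay for the two negative
coefficients, and the third copy, with `r 0 = 1` once more, supplies the bound `ρ n ≤ 1` for
`19 ≤ n`.
-/

open Finset Nat.Partition PowerSeries

section RestrictedPartitions

variable {p : ℕ → Prop} [DecidablePred p] {a n : ℕ}

theorem mem_restricted {x : n.Partition} : x ∈ restricted n p ↔ ∀ i ∈ x.parts, p i := by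
  simp [restricted]

theorem card_restricted_zero : #(restricted 0 p) = 1 := by
  simp [restricted]

theorem card_filter_mem_parts_restricted (ha : 0 < a) (han : a ≤ n) (hpa : p a) :
    #{x ∈ restricted n p | a ∈ x.parts} = #(restricted (n - a) p) := by
  refine card_bij' (fun x hx ↦ partitionWithPartEquiv ha han ⟨x, (mem_filter.1 hx).2⟩)
    (fun y _ ↦ (partitionWithPartEquiv ha han).symm y) ?_ ?_ (by simp) (by simp)
  · intro x hx
    simp only [mem_filter, mem_restricted] at hx
    simpa [mem_restricted] using fun i hi ↦ hx.1 i (Multiset.mem_of_mem_erase hi)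
  · intro y hy
    simp_all [mem_restricted]

theorem filter_notMem_parts_restricted :
    {x ∈ restricted n p | a ∉ x.parts} = restricted n (fun i ↦ p i ∧ i ≠ a) := by
  ext x
  simp only [mem_filter, mem_restricted]
  grind

theorem card_restricted_eq_add (ha : 0 < a) (han : a ≤ n) (hpa : p a) :
    #(restricted n p) = #(restricted (n - a) p) + #(restricted n (fun i ↦ p i ∧ i ≠ a)) := by
  rw [← card_filter_mem_parts_restricted ha han hpa, ← filter_notMem_parts_restricted,
    card_filter_add_card_filter_not]

theorem restricted_and_ne_of_lt (hna : n < a) :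
    restricted n (fun i ↦ p i ∧ i ≠ a) = restricted n p := by
  ext x
  simp only [mem_restricted]
  exact forall₂_congr fun i hi ↦ and_iff_left (by have := x.le_of_mem_parts hi; omega)

theorem card_restricted_le_sum (hn : 0 < n) :
    #(restricted n p) ≤ ∑ k ∈ Icc 1 n with p k, #(restricted (n - k) p) := by
  have hcover : restricted n p ⊆
      {k ∈ Icc 1 n | p k}.biUnion fun k ↦ {x ∈ restricted n p | k ∈ x.parts} := by
    intro x hx
    have hparts : x.parts ≠ 0 := fun h ↦ hn.ne (by simpa [h] using x.parts_sum)
    obtain ⟨k, hk⟩ := Multiset.exists_mem_of_ne_zero hparts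
    simp only [mem_biUnion, mem_filter, mem_Icc]
    exact ⟨k, ⟨⟨x.parts_pos hk, x.le_of_mem_parts hk⟩, mem_restricted.1 hx k hk⟩, hx, hk⟩
  refine ((card_le_card hcover).trans card_biUnion_le).trans_eq (sum_congr rfl fun k hk ↦ ?_)
  simp only [mem_filter, mem_Icc] at hk
  exact card_filter_mem_parts_restricted hk.1.1 hk.1.2 hk.2

theorem card_restricted_sub_le_sum {c d j : ℕ} (hp : ∀ i, p i → c ≤ i) (hd : d ≤ c + j)
    (hj : j < n) :
    #(restricted (n - j) p) ≤ ∑ k ∈ Icc d n, #(restricted (n - k) p) := by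
  calc #(restricted (n - j) p)
      ≤ ∑ k ∈ Icc 1 (n - j) with p k, #(restricted (n - j - k) p) :=
        card_restricted_le_sum (Nat.sub_pos_of_lt hj)
    _ = ∑ k ∈ {k ∈ Icc 1 (n - j) | p k}.image (j + ·), #(restricted (n - k) p) := by
        rw [sum_image (add_right_injective j).injOn]
        exact sum_congr rfl fun k _ ↦ by rw [Nat.sub_sub]
    _ ≤ ∑ k ∈ Icc d n, #(restricted (n - k) p) := by
        refine sum_le_sum_of_subset fun k hk ↦ ?_
        simp only [mem_image, mem_filter, mem_Icc] at hk ⊢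
        obtain ⟨i, ⟨hi, hpi⟩, rfl⟩ := hk
        have := hp i hpi
        omega

theorem ite_eq_le_ite_card_restricted_sub (j : ℕ) :
    (if n = j then 1 else 0) ≤ if j ≤ n then #(restricted (n - j) p) else 0 := by
  rcases eq_or_ne n j with rfl | hnj
  · rw [if_pos rfl, if_pos le_rfl, Nat.sub_self, card_restricted_zero]
  · rw [if_neg hnj]
    exact Nat.zero_le _

theorem ite_le_sum_card_restricted_sub (d : ℕ) :
    (if d ≤ n then 1 else 0) ≤ ∑ k ∈ Icc d n, #(restricted (n - k) p) := by
  split_ifs with hn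
  · rw [← card_restricted_zero (p := p), ← Nat.sub_self n]
    exact single_le_sum (f := fun k ↦ #(restricted (n - k) p)) (fun _ _ ↦ Nat.zero_le _)
      (mem_Icc.2 ⟨hn, le_rfl⟩)
  · exact Nat.zero_le _

theorem ite_card_restricted_sub_le_add_sum {c d j : ℕ} (hp : ∀ i, p i → c ≤ i)
    (hd : d ≤ c + j) :
    (if j ≤ n then #(restricted (n - j) p) else 0) ≤
      (if n = j then 1 else 0) + ∑ k ∈ Icc d n, #(restricted (n - k) p) := by
  rcases lt_trichotomy j n with hjn | rfl | hjn
  · simpa only [hjn.le, hjn.ne', if_true, if_false, zero_add] using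
      card_restricted_sub_le_sum hp hd hjn
  · rw [if_pos le_rfl, if_pos rfl, Nat.sub_self, card_restricted_zero]
    exact Nat.le_add_right _ _
  · simp only [hjn.not_ge, if_false, Nat.zero_le]

end RestrictedPartitions

/-- The generating function `∏ 1 / (1 - X ^ i)`, over the positive `i` satisfying `p`, of the
partitions all of whose parts satisfy `p`. -/
noncomputable def restrictedGenFun (p : ℕ → Prop) [DecidablePred p] : ℤ⟦X⟧ :=
  PowerSeries.mk fun n ↦ (#(restricted n p) : ℤ)

theorem coeff_restrictedGenFun (p : ℕ → Prop) [DecidablePred p] (n : ℕ) :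
    coeff n (restrictedGenFun p) = #(restricted n p) :=
  coeff_mk _ _

theorem restrictedGenFun_congr {p q : ℕ → Prop} [DecidablePred p] [DecidablePred q]
    (hpq : ∀ i, p i ↔ q i) : restrictedGenFun p = restrictedGenFun q := by
  simp only [restrictedGenFun, restricted, hpq]

theorem one_sub_X_pow_mul_restrictedGenFun {p : ℕ → Prop} [DecidablePred p] {a : ℕ} (ha : 0 < a)
    (hpa : p a) :
    (1 - X ^ a) * restrictedGenFun p = restrictedGenFun (fun i ↦ p i ∧ i ≠ a) := by
  ext n
  rw [sub_mul, one_mul, map_sub, coeff_X_pow_mul']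
  simp only [coeff_restrictedGenFun]
  split_ifs with han
  · rw [card_restricted_eq_add ha han hpa]
    push_cast
    ring
  · rw [sub_zero, restricted_and_ne_of_lt (not_le.1 han)]

theorem restrictedGenFun_mem_nil : restrictedGenFun (· ∈ ([] : List ℕ)) = 1 := by
  ext n
  rw [coeff_restrictedGenFun, coeff_one]
  split_ifs with hn
  · rw [hn, card_restricted_zero, Nat.cast_one]
  · have hle := card_restricted_le_sum (p := (· ∈ ([] : List ℕ))) (Nat.pos_of_ne_zero hn)
    simpa using hle

theorem one_sub_X_pow_mul_restrictedGenFun_mem_cons {m : ℕ} {l : List ℕ} (hm : 0 < m)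
    (hml : m ∉ l) :
    (1 - X ^ m) * restrictedGenFun (· ∈ m :: l) = restrictedGenFun (· ∈ l) := by
  rw [one_sub_X_pow_mul_restrictedGenFun hm List.mem_cons_self]
  exact restrictedGenFun_congr (by grind)

theorem restrictedGenFun_mem_mul_notMem {p : ℕ → Prop} [DecidablePred p] {l : List ℕ}
    (hl : l.Nodup) (hlp : ∀ m ∈ l, 0 < m ∧ p m) :
    restrictedGenFun (· ∈ l) * restrictedGenFun (fun i ↦ p i ∧ i ∉ l) = restrictedGenFun p := by
  induction l with
  | nil =>
    rw [restrictedGenFun_mem_nil, one_mul]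
    exact restrictedGenFun_congr (by simp)
  | cons m l ih =>
    obtain ⟨hml, hl⟩ := List.nodup_cons.1 hl
    obtain ⟨⟨hm, hpm⟩, hlp⟩ := List.forall_mem_cons.1 hlp
    have hcons : restrictedGenFun (fun i ↦ p i ∧ i ∉ m :: l) =
        (1 - X ^ m) * restrictedGenFun (fun i ↦ p i ∧ i ∉ l) := by
      rw [one_sub_X_pow_mul_restrictedGenFun hm ⟨hpm, hml⟩]
      exact restrictedGenFun_congr (by grind)
    rw [hcons, ← ih hl hlp, ← one_sub_X_pow_mul_restrictedGenFun_mem_cons hm hml]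
    ring

section GeometricQuotient

variable {F G : ℤ⟦X⟧} {m : ℕ}

theorem coeff_eq_of_one_sub_X_pow_mul_eq (hG : (1 - X ^ m) * G = F) (k : ℕ) :
    coeff k G = coeff k F + if m ≤ k then coeff (k - m) G else 0 := by
  rw [← hG, sub_mul, one_mul, map_sub, coeff_X_pow_mul', sub_add_cancel]

theorem le_coeff_of_one_sub_X_pow_mul_eq {a : ℕ} {d : ℤ} (hm : 0 < m)
    (hG : (1 - X ^ m) * G = F) (hF : ∀ k, a ≤ k → 0 ≤ coeff k F)
    (hd : ∀ k ∈ Ico a (a + m), d ≤ coeff k G) (k : ℕ) (hk : a ≤ k) : d ≤ coeff k G := by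
  induction k using Nat.strong_induction_on with
  | _ k ih =>
    by_cases hkm : k < a + m
    · exact hd k (mem_Ico.2 ⟨hk, hkm⟩)
    · rw [coeff_eq_of_one_sub_X_pow_mul_eq hG, if_pos (by omega)]
      linarith [hF k hk, ih (k - m) (by omega) (by omega)]

theorem coeff_mul_restrictedGenFun_mem_nonneg {a b : ℕ} (hF : ∀ k, a ≤ k → 0 ≤ coeff k F)
    {l : List ℕ} (hl : l.Nodup) (hlb : ∀ m ∈ l, 0 < m ∧ m ≤ b)
    (hwindow : ∀ t ∈ l.tails, ∀ k ∈ Ico a (a + b),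
      0 ≤ coeff k (F * restrictedGenFun (· ∈ t))) (k : ℕ) (hk : a ≤ k) :
    0 ≤ coeff k (F * restrictedGenFun (· ∈ l)) := by
  induction l generalizing k with
  | nil => simpa only [restrictedGenFun_mem_nil, mul_one] using hF k hk
  | cons m l ih =>
    obtain ⟨hml, hl⟩ := List.nodup_cons.1 hl
    obtain ⟨⟨hm, hmb⟩, hlb⟩ := List.forall_mem_cons.1 hlb
    obtain ⟨hcons, htails⟩ := List.forall_mem_cons.1 hwindow
    refine le_coeff_of_one_sub_X_pow_mul_eq hm ?_ (ih hl hlb htails)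
      (fun k hk ↦ hcons k (Ico_subset_Ico_right (by omega) hk)) k hk
    rw [mul_left_comm, one_sub_X_pow_mul_restrictedGenFun_mem_cons hm hml]

/-- The coefficients of `F` of index below `n`, listed from the highest index down. -/
noncomputable def coeffTable (n : ℕ) (F : ℤ⟦X⟧) : List ℤ := (List.range n).reverse.map (coeff · F)

/-- Turns the table of coefficients of `F` into that of `F / (1 - X ^ m)`. Tables run from the
highest index down, so that the quotient is a right fold and the kernel can evaluate it. -/
def divTable (m : ℕ) (l : List ℤ) : List ℤ := l.foldr (fun c t ↦ (c + t.getD (m - 1) 0) :: t) []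

theorem coeffTable_succ (n : ℕ) : coeffTable (n + 1) F = coeff n F :: coeffTable n F := by
  simp [coeffTable, List.range_succ]

theorem getD_coeffTable (n j : ℕ) :
    (coeffTable n F).getD j 0 = if j < n then coeff (n - 1 - j) F else 0 := by
  split_ifs with hj
  · simp [coeffTable, hj]
  · exact List.getD_eq_default _ _ (by simpa [coeffTable] using hj)

theorem divTable_coeffTable (hm : 0 < m) (hG : (1 - X ^ m) * G = F) (n : ℕ) :
    divTable m (coeffTable n F) = coeffTable n G := by
  induction n with
  | zero => rfl
  | succ n ih =>
    rw [coeffTable_succ, divTable, List.foldr_cons, ← divTable, ih, getD_coeffTable,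
      coeffTable_succ, coeff_eq_of_one_sub_X_pow_mul_eq hG n,
      show n - 1 - (m - 1) = n - m by omega]
    simp only [show m - 1 < n ↔ m ≤ n ∧ 0 < n by omega]
    grind

theorem foldr_divTable_coeffTable {l : List ℕ} (hl : l.Nodup) (hpos : ∀ m ∈ l, 0 < m) (n : ℕ) :
    l.foldr divTable (coeffTable n F) = coeffTable n (F * restrictedGenFun (· ∈ l)) := by
  induction l with
  | nil => rw [restrictedGenFun_mem_nil, mul_one, List.foldr_nil]
  | cons m l ih =>
    obtain ⟨hml, hl⟩ := List.nodup_cons.1 hl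
    obtain ⟨hm, hpos⟩ := List.forall_mem_cons.1 hpos
    rw [List.foldr_cons, ih hl hpos]
    refine divTable_coeffTable hm ?_ n
    rw [mul_left_comm, one_sub_X_pow_mul_restrictedGenFun_mem_cons hm hml]

end GeometricQuotient

/-- The polynomial `1 - q - q ^ 2 + q ^ 5 + q ^ 7 - q ^ 12`, the truncation of Euler's pentagonal
number series whose coefficients weight the values of `b3`. -/
noncomputable def truncatedPentagonal : ℤ⟦X⟧ := 1 - X ^ 1 - X ^ 2 + X ^ 5 + X ^ 7 - X ^ 12

theorem coeff_truncatedPentagonal (k : ℕ) :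
    coeff k truncatedPentagonal =
      if k ∈ [0, 5, 7] then 1 else if k ∈ [1, 2, 12] then -1 else 0 := by
  simp only [truncatedPentagonal, map_add, map_sub, coeff_X_pow, coeff_one]
  grind

/-- The positive integers below `16` that are not divisible by `3`, in decreasing order: a right
fold of `divTable` divides by the last factor first, and dividing by `1 - X` first keeps all
intermediate quotients nonnegative from index `19` on. -/
def smallParts : List ℕ := [14, 13, 11, 10, 8, 7, 5, 4, 2, 1]

/-- The coefficients below `33` of `truncatedPentagonal / ∏ (1 - q ^ m)`, the product running over
`m ∈ l`, in a form the kernel can evaluate. -/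
def quotientTable (l : List ℕ) : List ℤ :=
  l.foldr divTable ((List.range 33).reverse.map fun k ↦
    if k ∈ [0, 5, 7] then 1 else if k ∈ [1, 2, 12] then -1 else 0)

theorem coeff_truncatedPentagonal_mul_restrictedGenFun {l : List ℕ} (hl : l ∈ smallParts.tails)
    {k : ℕ} (hk : k < 33) :
    coeff k (truncatedPentagonal * restrictedGenFun (· ∈ l)) =
      (quotientTable l).getD (32 - k) 0 := by
  have hsub : l.Sublist smallParts := ((List.mem_tails _ _).1 hl).sublist
  have hnodup : l.Nodup := hsub.nodup (by decide)
  have hpos : ∀ m ∈ l, 0 < m := fun m hm ↦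
    (by decide : ∀ m ∈ smallParts, 0 < m) m (hsub.subset hm)
  have htable : quotientTable l = l.foldr divTable (coeffTable 33 truncatedPentagonal) := by
    simp only [quotientTable, coeffTable, coeff_truncatedPentagonal]
  rw [htable, foldr_divTable_coeffTable hnodup hpos, getD_coeffTable, if_pos (by omega)]
  congr 2
  omega

theorem three_le_coeff_truncatedPentagonal_mul_restrictedGenFun {k : ℕ} (hk : 19 ≤ k) :
    3 ≤ coeff k (truncatedPentagonal * restrictedGenFun (· ∈ smallParts)) := by
  have htail : ∀ k, 19 ≤ k →
      0 ≤ coeff k (truncatedPentagonal * restrictedGenFun (· ∈ smallParts.tail)) := by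
    refine coeff_mul_restrictedGenFun_mem_nonneg (b := 14) ?_ (by decide) (by decide) ?_
    · intro k hk
      rw [coeff_truncatedPentagonal]
      grind
    · intro t ht k hk
      have htails : t ∈ smallParts.tails := List.mem_cons_of_mem _ ht
      rw [coeff_truncatedPentagonal_mul_restrictedGenFun htails (mem_Ico.1 hk).2]
      exact (by decide +kernel : ∀ t ∈ smallParts.tails, ∀ k ∈ Ico 19 33,
        0 ≤ (quotientTable t).getD (32 - k) 0) t htails k hk
  refine le_coeff_of_one_sub_X_pow_mul_eq (m := 14) (by decide) ?_ htail ?_ k hk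
  · rw [mul_left_comm]
    exact congrArg _ (one_sub_X_pow_mul_restrictedGenFun_mem_cons (by decide) (by decide))
  · intro k hk
    rw [coeff_truncatedPentagonal_mul_restrictedGenFun (by decide) (mem_Ico.1 hk).2]
    exact (by decide +kernel : ∀ k ∈ Ico 19 33,
      3 ≤ (quotientTable smallParts).getD (32 - k) 0) k hk

/-- The coefficients of `1 - q ^ 3 - q ^ 6 + q ^ 15 + ∑_{k ≥ 19} q ^ k`, a pointwise upper bound
of `ρ_3`. -/
def rhoMajorant (k : ℕ) : ℤ :=
  (if k = 0 then 1 else 0) - (if k = 3 then 1 else 0) - (if k = 6 then 1 else 0) +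
    (if k = 15 then 1 else 0) + (if 19 ≤ k then 1 else 0)

/-- The coefficients of `1 - q ^ 3 - q ^ 6 + q ^ 15 + 3 * ∑_{k ≥ 19} q ^ k`, a pointwise lower
bound of `truncatedPentagonal / ∏ (1 - q ^ m)`, the product running over `m ∈ smallParts`. -/
def quotientMinorant (k : ℕ) : ℤ := rhoMajorant k + if 19 ≤ k then 2 else 0

theorem quotientMinorant_le_coeff (k : ℕ) :
    quotientMinorant k ≤
      coeff k (truncatedPentagonal * restrictedGenFun (· ∈ smallParts)) := by
  by_cases hk : 19 ≤ k
  · have := three_le_coeff_truncatedPentagonal_mul_restrictedGenFun hk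
    rw [quotientMinorant, rhoMajorant]
    grind
  · rw [coeff_truncatedPentagonal_mul_restrictedGenFun (by decide) (by omega)]
    exact (by decide +kernel : ∀ k < 19,
      quotientMinorant k ≤ (quotientTable smallParts).getD (32 - k) 0) k (not_le.1 hk)

theorem sum_quotientMinorant_mul (r : ℕ → ℤ) (n : ℕ) :
    ∑ k ∈ range (n + 1), quotientMinorant k * r (n - k) =
      r n - (if 3 ≤ n then r (n - 3) else 0) - (if 6 ≤ n then r (n - 6) else 0) +
        (if 15 ≤ n then r (n - 15) else 0) + 3 * ∑ k ∈ Icc 19 n, r (n - k) := by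
  have htail : ∑ k ∈ Icc 19 n, r (n - k) =
      ∑ k ∈ range (n + 1), (if 19 ≤ k then r (n - k) else 0) := by
    rw [← sum_filter]
    congr 1
    grind
  simp only [htail, quotientMinorant, rhoMajorant, add_mul, sub_mul, ite_mul, zero_mul, one_mul,
    sum_add_distrib, sum_sub_distrib, sum_ite_eq', mem_range, Nat.lt_succ_iff, ← mul_ite_zero,
    ← mul_sum, Nat.zero_le, if_true, Nat.sub_zero]
  ring

theorem rhoMajorant_le_sum_quotientMinorant_mul {p : ℕ → Prop} [DecidablePred p]
    (hp : ∀ i, p i → 16 ≤ i) (n : ℕ) :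
    rhoMajorant n ≤ ∑ k ∈ range (n + 1), quotientMinorant k * (#(restricted (n - k) p) : ℤ) := by
  rw [sum_quotientMinorant_mul (fun m ↦ (#(restricted m p) : ℤ)) n, rhoMajorant]
  have h0 := ite_eq_le_ite_card_restricted_sub (p := p) (n := n) 0
  have h3 := ite_card_restricted_sub_le_add_sum (n := n) (d := 19) (j := 3) hp (by norm_num)
  have h6 := ite_card_restricted_sub_le_add_sum (n := n) (d := 19) (j := 6) hp (by norm_num)
  have h15 := ite_eq_le_ite_card_restricted_sub (p := p) (n := n) 15
  have h19 := ite_le_sum_card_restricted_sub (p := p) (n := n) 19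
  simp only [Nat.zero_le, if_true, Nat.sub_zero] at h0
  zify at h0 h3 h6 h15 h19 ⊢
  linarith

theorem rhoMajorant_le_coeff (n : ℕ) :
    rhoMajorant n ≤ coeff n (truncatedPentagonal * restrictedGenFun (¬ 3 ∣ ·)) := by
  have hlarge : ∀ i, ¬ 3 ∣ i ∧ i ∉ smallParts → 16 ≤ i := by
    intro i hi
    simp only [smallParts, List.mem_cons, List.not_mem_nil] at hi
    omega
  rw [← restrictedGenFun_mem_mul_notMem (p := (¬ 3 ∣ ·)) (l := smallParts) (by decide)
    (by decide), ← mul_assoc, coeff_mul, Nat.sum_antidiagonal_eq_sum_range_succ_mk]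
  refine (rhoMajorant_le_sum_quotientMinorant_mul hlarge n).trans (sum_le_sum fun k _ ↦ ?_)
  rw [coeff_restrictedGenFun]
  exact mul_le_mul_of_nonneg_right (quotientMinorant_le_coeff k) (Nat.cast_nonneg _)

theorem b3_natCast (n : ℕ) : b3 n = #(restricted n (¬ 3 ∣ ·)) := by
  rw [b3, ← Nat.card_eq_finsetCard]
  exact Nat.card_congr
    { toFun := fun s ↦ ⟨⟨s.1, fun hi ↦ (s.2.2 _ hi).1, mod_cast s.2.1⟩,
        mem_restricted.2 fun i hi ↦ (s.2.2 i hi).2⟩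
      invFun := fun x ↦ ⟨x.1.parts, mod_cast x.1.parts_sum,
        fun i hi ↦ ⟨x.1.parts_pos hi, mem_restricted.1 x.2 i hi⟩⟩ }

theorem b3_of_neg {m : ℤ} (hm : m < 0) : b3 m = 0 := by
  rw [b3, Nat.card_eq_zero]
  exact .inl ⟨fun s ↦ by have := s.2.1; omega⟩

theorem b3_natCast_sub (n j : ℕ) :
    (b3 ((n : ℤ) - (j : ℤ)) : ℤ) = coeff n (X ^ j * restrictedGenFun (¬ 3 ∣ ·)) := by
  rw [coeff_X_pow_mul']
  split_ifs with hj
  · rw [← Nat.cast_sub hj, b3_natCast, coeff_restrictedGenFun]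
  · rw [b3_of_neg (by omega), Nat.cast_zero]

theorem b3_alternatingSum_eq_coeff (n : ℕ) :
    (b3 n : ℤ) - (b3 ((n : ℤ) - 1) : ℤ) - (b3 ((n : ℤ) - 2) : ℤ) + (b3 ((n : ℤ) - 5) : ℤ) +
        (b3 ((n : ℤ) - 7) : ℤ) - (b3 ((n : ℤ) - 12) : ℤ) =
      coeff n (truncatedPentagonal * restrictedGenFun (¬ 3 ∣ ·)) := by
  have h := b3_natCast_sub n
  simp only [truncatedPentagonal, sub_mul, add_mul, one_mul, map_add, map_sub, ← h]
  simp [coeff_restrictedGenFun, b3_natCast]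

theorem pentagonal_mem_of_lt {i : ℤ} (hi : i * (3 * i - 1) / 2 < 7) :
    i * (3 * i - 1) / 2 ∈ ({0, 1, 2, 5} : Set ℤ) := by
  have hi' : i * (3 * i - 1) < 14 := by omega
  have hlower : -2 < i := by nlinarith
  have hupper : i < 3 := by nlinarith
  interval_cases i <;> norm_num

section Rho

variable {ρ : ℤ → ℤ}

theorem le_one_of_pentagonal (hρ1 : ∀ i : ℤ, ρ (3 * (i * (3 * i - 1) / 2)) = (-1) ^ i.natAbs)
    (hρ2 : ∀ m : ℤ, (∀ i : ℤ, m ≠ 3 * (i * (3 * i - 1) / 2)) → ρ m = 0) (m : ℤ) : ρ m ≤ 1 := by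
  by_cases hm : ∃ i : ℤ, m = 3 * (i * (3 * i - 1) / 2)
  · obtain ⟨i, rfl⟩ := hm
    rw [hρ1]
    rcases neg_one_pow_eq_or ℤ i.natAbs with h | h <;> simp [h]
  · rw [hρ2 m (not_exists.1 hm)]
    exact zero_le_one

theorem le_rhoMajorant (hρ1 : ∀ i : ℤ, ρ (3 * (i * (3 * i - 1) / 2)) = (-1) ^ i.natAbs)
    (hρ2 : ∀ m : ℤ, (∀ i : ℤ, m ≠ 3 * (i * (3 * i - 1) / 2)) → ρ m = 0) (n : ℕ) :
    ρ n ≤ rhoMajorant n := by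
  have hle := le_one_of_pentagonal hρ1 hρ2 n
  have hρ3 : ρ 3 = -1 := by simpa using hρ1 1
  have hρ6 : ρ 6 = -1 := by simpa using hρ1 (-1)
  by_cases hpent : ∃ i : ℤ, (n : ℤ) = 3 * (i * (3 * i - 1) / 2)
  · obtain ⟨i, hi⟩ := hpent
    rcases lt_or_ge n 19 with hn | hn
    · have hmem := pentagonal_mem_of_lt (i := i) (by omega)
      simp only [Set.mem_insert_iff, Set.mem_singleton_iff] at hmem
      obtain rfl | rfl | rfl | rfl : n = 0 ∨ n = 3 ∨ n = 6 ∨ n = 15 := by omega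
      · exact hle
      · exact hρ3.le
      · exact hρ6.le
      · exact hle
    · exact hle.trans (by rw [rhoMajorant]; grind)
  · have hn : ρ n = 0 := hρ2 n (not_exists.1 hpent)
    rw [rhoMajorant]
    grind

end Rho

/-- For every `n ≥ 0`,
`b_3(n) − b_3(n−1) − b_3(n−2) + b_3(n−5) + b_3(n−7) − b_3(n−12) − ρ_3(n) ≥ 0`. -/
theorem stmt15
    (ρ : ℤ → ℤ)
    (hρ1 : ∀ i : ℤ, ρ (3 * (i * (3 * i - 1) / 2)) = (-1) ^ i.natAbs)
    (hρ2 : ∀ m : ℤ, (∀ i : ℤ, m ≠ 3 * (i * (3 * i - 1) / 2)) → ρ m = 0)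
    (n : ℤ) (hn : 0 ≤ n) :
    0 ≤ (b3 n : ℤ) - (b3 (n - 1) : ℤ) - (b3 (n - 2) : ℤ) + (b3 (n - 5) : ℤ)
        + (b3 (n - 7) : ℤ) - (b3 (n - 12) : ℤ) - ρ n := by
  obtain ⟨n, rfl⟩ := Int.eq_ofNat_of_zero_le hn
  rw [b3_alternatingSum_eq_coeff, sub_nonneg]
  exact (le_rhoMajorant hρ1 hρ2 n).trans (rhoMajorant_le_coeff n)
end

section
/- For every integer n ≥ 0, Q(n) − Q(n−1) − ρ_4(n) ≥ 0. -/
/-- `Q m` is the number of partitions of `m` into distinct parts, with `Q m = 0`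
for `m < 0`. A partition is a multiset of positive parts. -/
noncomputable def Q (m : ℤ) : ℕ :=
  Nat.card {s : Multiset ℕ // (s.sum : ℤ) = m ∧ s.Nodup ∧ ∀ a ∈ s, 0 < a}

/-!
Increasing the largest part by one embeds the distinct-part partitions of `n - 1` into those of
`n`. A partition whose two largest parts are consecutive is not in the image, and for `n ≥ 5` one
exists: `(k + 1) + k` or `(k + 1) + k + 1`. So `Q (n - 1) < Q n` for `n ≥ 5`, which suffices because
`ρ ≤ 1`; among the smaller arguments `ρ` is positive only at `0`, where `Q 0 = 1` and `Q (-1) = 0`.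
-/

theorem sup_mem_of_ne_zero {α : Type*} [LinearOrder α] [OrderBot α] {s : Multiset α}
    (hs : s ≠ 0) : s.sup ∈ s := by
  induction s using Multiset.induction_on with
  | empty => exact absurd rfl hs
  | cons a s ih =>
    rw [Multiset.sup_cons]
    rcases eq_or_ne s 0 with rfl | hs'
    · simp
    · rcases max_choice a s.sup with h | h
      · rw [h]; exact Multiset.mem_cons_self _ _
      · rw [h]; exact Multiset.mem_cons_of_mem (ih hs')

/-- The partitions of `m` into distinct parts, as multisets of positive parts; this is the set
counted by `Q m`. -/
def distinctPartitions (m : ℤ) : Set (Multiset ℕ) :=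
  {s | (s.sum : ℤ) = m ∧ s.Nodup ∧ ∀ a ∈ s, 0 < a}

theorem Q_eq_ncard (m : ℤ) : Q m = (distinctPartitions m).ncard := rfl

theorem distinctPartitions_finite (m : ℤ) : (distinctPartitions m).Finite := by
  refine (Set.finite_Iic (Multiset.range (m.toNat + 1))).subset ?_
  rintro s ⟨hsum, hnodup, -⟩
  rw [Set.mem_Iic, Multiset.le_iff_subset hnodup]
  intro a ha
  have hle := Multiset.le_sum_of_mem ha
  rw [Multiset.mem_range]
  omega

theorem Q_of_neg {m : ℤ} (hm : m < 0) : Q m = 0 := by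
  rw [Q_eq_ncard, Set.ncard_eq_zero (distinctPartitions_finite m), Set.eq_empty_iff_forall_notMem]
  rintro s ⟨hsum, -⟩
  omega

theorem Q_zero : Q 0 = 1 := by
  rw [Q_eq_ncard, Set.ncard_eq_one]
  refine ⟨0, Set.eq_singleton_iff_unique_mem.2 ⟨by simp [distinctPartitions], ?_⟩⟩
  rintro s ⟨hsum, -, hpos⟩
  refine Multiset.eq_zero_of_forall_notMem fun a ha => (hpos a ha).ne' ?_
  have hle := Multiset.le_sum_of_mem ha
  omega

/-- The partition obtained by increasing the largest part by one. The empty partition, whose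
supremum is `0`, is sent to `{1}`. -/
def incrementLargest (s : Multiset ℕ) : Multiset ℕ :=
  (s.sup + 1) ::ₘ s.erase s.sup

theorem sup_incrementLargest (s : Multiset ℕ) : (incrementLargest s).sup = s.sup + 1 := by
  rw [incrementLargest, Multiset.sup_cons, sup_eq_left]
  exact (Multiset.sup_mono (Multiset.erase_subset _ _)).trans (Nat.le_succ _)

theorem sum_incrementLargest (s : Multiset ℕ) : (incrementLargest s).sum = s.sum + 1 := by
  rcases eq_or_ne s 0 with rfl | hs
  · simp [incrementLargest]
  · rw [incrementLargest, Multiset.sum_cons, ← Multiset.sum_erase (sup_mem_of_ne_zero hs)]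
    ring

theorem nodup_incrementLargest {s : Multiset ℕ} (hs : s.Nodup) : (incrementLargest s).Nodup := by
  refine Multiset.nodup_cons.2 ⟨fun h => ?_, hs.erase _⟩
  exact (Nat.lt_succ_self _).not_ge (Multiset.le_sup (Multiset.mem_of_mem_erase h))

theorem sup_notMem_incrementLargest {s : Multiset ℕ} (hs : s.Nodup) :
    s.sup ∉ incrementLargest s := by
  simp [incrementLargest, hs.notMem_erase]

theorem incrementLargest_mem_distinctPartitions {m : ℤ} {s : Multiset ℕ}
    (hs : s ∈ distinctPartitions m) : incrementLargest s ∈ distinctPartitions (m + 1) := by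
  obtain ⟨hsum, hnodup, hpos⟩ := hs
  refine ⟨?_, nodup_incrementLargest hnodup, fun a ha => ?_⟩
  · rw [sum_incrementLargest, Nat.cast_succ, hsum]
  · rcases Multiset.mem_cons.1 ha with rfl | ha
    · exact Nat.succ_pos _
    · exact hpos a (Multiset.mem_of_mem_erase ha)

/-- The partition obtained by decreasing the largest part by one, the inverse of
`incrementLargest`. A part that becomes `0` is dropped. -/
def decrementLargest (s : Multiset ℕ) : Multiset ℕ :=
  ((s.sup - 1) ::ₘ s.erase s.sup).erase 0

theorem decrementLargest_incrementLargest {s : Multiset ℕ} (hs : 0 ∉ s) :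
    decrementLargest (incrementLargest s) = s := by
  rw [decrementLargest, sup_incrementLargest, incrementLargest, Multiset.erase_cons_head,
    Nat.add_sub_cancel]
  rcases eq_or_ne s 0 with rfl | hne
  · simp
  · rw [Multiset.cons_erase (sup_mem_of_ne_zero hne), Multiset.erase_of_notMem hs]

theorem incrementLargest_injOn (m : ℤ) : Set.InjOn incrementLargest (distinctPartitions m) :=
  Set.LeftInvOn.injOn fun _ hs =>
    decrementLargest_incrementLargest fun h0 => (hs.2.2 0 h0).false

theorem Q_monotone : Monotone Q :=
  monotone_int_of_le_succ fun m =>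
    Set.ncard_le_ncard_of_injOn incrementLargest
      (fun _ => incrementLargest_mem_distinctPartitions) (incrementLargest_injOn m)
      (distinctPartitions_finite (m + 1))

theorem Q_lt_Q_add_one_of_consecutive {m : ℤ} {t : Multiset ℕ} {k : ℕ}
    (ht : t ∈ distinctPartitions (m + 1)) (hsup : t.sup = k + 1) (hk : k ∈ t) :
    Q m < Q (m + 1) := by
  have ht_image : t ∉ incrementLargest '' distinctPartitions m := by
    rintro ⟨s, hs, rfl⟩
    rw [sup_incrementLargest, Nat.add_right_cancel_iff] at hsup
    exact sup_notMem_incrementLargest hs.2.1 (hsup ▸ hk)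
  have himage : incrementLargest '' distinctPartitions m ⊆ distinctPartitions (m + 1) :=
    Set.image_subset_iff.2 fun _ => incrementLargest_mem_distinctPartitions
  rw [Q_eq_ncard, Q_eq_ncard, ← (incrementLargest_injOn m).ncard_image]
  exact Set.ncard_lt_ncard ((Set.ssubset_iff_of_subset himage).2 ⟨t, ht, ht_image⟩)
    (distinctPartitions_finite _)

theorem Q_lt_Q_add_one {m : ℤ} (hm : 4 ≤ m) : Q m < Q (m + 1) := by
  obtain ⟨k, hk, rfl | rfl⟩ : ∃ k : ℕ, 2 ≤ k ∧ (m = 2 * k ∨ m = 2 * k + 1) :=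
    ⟨(m / 2).toNat, by omega, by omega⟩
  · refine Q_lt_Q_add_one_of_consecutive (t := {k + 1, k}) (k := k) ⟨?_, ?_, ?_⟩ ?_ ?_
    · simp; ring
    · simp
    · simp; omega
    · simp
    · simp
  · refine Q_lt_Q_add_one_of_consecutive (t := {k + 1, k, 1}) (k := k) ⟨?_, ?_, ?_⟩ ?_ ?_
    · simp; ring
    · simp; omega
    · simp; omega
    · simp
    · simp

/-- For every `n ≥ 0`, `Q(n) − Q(n−1) − ρ_4(n) ≥ 0`. -/
theorem stmt16
    (ρ : ℤ → ℤ)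
    (hρ1 : ∀ i : ℤ, ρ (4 * (i * (3 * i - 1) / 2)) = (-1) ^ i.natAbs)
    (hρ2 : ∀ m : ℤ, (∀ i : ℤ, m ≠ 4 * (i * (3 * i - 1) / 2)) → ρ m = 0)
    (n : ℤ) (hn : 0 ≤ n) :
    0 ≤ (Q n : ℤ) - (Q (n - 1) : ℤ) - ρ n := by
  have hmono : Q (n - 1) ≤ Q n := Q_monotone (Int.sub_le_self n zero_le_one)
  by_cases hpent : ∃ i : ℤ, n = 4 * (i * (3 * i - 1) / 2)
  · obtain ⟨i, hi⟩ := hpent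
    have hρ_le : ρ n ≤ 1 := by
      rw [hi, hρ1]
      exact le_of_abs_le (abs_neg_one_pow _).le
    obtain rfl | rfl | hn5 : n = 0 ∨ n = 4 ∨ 5 ≤ n := by omega
    · rw [Q_zero, Q_of_neg (by norm_num)]
      omega
    · have hρ4 : ρ 4 = -1 := by simpa using hρ1 1
      omega
    · have hlt : Q (n - 1) < Q n := by
        simpa using Q_lt_Q_add_one (m := n - 1) (by omega)
      omega
  · rw [hρ2 n (not_exists.1 hpent)]
    omega
end

section
/- For every integer n ≥ 0, Q(n) − Q(n−1) − Q(n−3) + Q(n−6) − ρ_4(n) ≤ 0. -/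
/-!
By Euler's theorem `Q n` counts the partitions of `n` into odd parts. Let `c k n` be the number of
those whose parts are all at least `k`. Splitting off a part `k` gives
`c k n = c (k + 2) n + c k (n - k)`, and repeated use of this turns
`Q n - Q (n - 1) - Q (n - 3) + Q (n - 6)` into `c 7 n - c 3 (n - 4) - c 3 (n - 8)`.
Subtracting `4` from the smallest part shows `c 7 n ≤ c 3 (n - 4)` for `n ≠ 0`. The correction
`ρ n` can only be negative when `4 ∣ n`, and for positive such `n` there is a partition of `n - 4`
or `n - 8` left over that makes the inequality strict.
-/

/-- The partitions of `n` into odd parts, each at least `k`, as multisets. Letting `n` be an integer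
makes the recurrence `oddPartitionCount_eq_add` hold for all `n`: there are none for `n < 0`. -/
def oddPartitions (k : ℕ) (n : ℤ) : Set (Multiset ℕ) :=
  {s | (s.sum : ℤ) = n ∧ ∀ a ∈ s, Odd a ∧ k ≤ a}

/-- The number of partitions of `n` into odd parts, each at least `k`. -/
noncomputable def oddPartitionCount (k : ℕ) (n : ℤ) : ℕ :=
  (oddPartitions k n).ncard

theorem ncard_multiset_sum_eq_card_partition (P : Multiset ℕ → Prop) [DecidablePred P]
    (hP : ∀ s, P s → ∀ a ∈ s, 0 < a) (n : ℕ) :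
    {s : Multiset ℕ | (s.sum : ℤ) = n ∧ P s}.ncard =
      (Finset.univ.filter fun p : n.Partition => P p.parts).card := by
  have parts_injective : Function.Injective (Nat.Partition.parts (n := n)) :=
    fun _ _ => Nat.Partition.ext
  rw [← Set.ncard_coe_finset, ← Set.ncard_image_of_injective _ parts_injective]
  congr 1
  ext s
  simp only [Set.mem_ofPred_eq, Finset.coe_filter, Finset.mem_univ, true_and, Set.mem_image]
  constructor
  · rintro ⟨hsum, hs⟩
    exact ⟨⟨s, fun {a} ha => hP s hs a ha, by exact_mod_cast hsum⟩, hs, rfl⟩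
  · rintro ⟨p, hp, rfl⟩
    exact ⟨by rw [p.parts_sum], hp⟩

theorem Q_natCast_eq_card_distincts (n : ℕ) : Q n = (Nat.Partition.distincts n).card := by
  classical
  have h := ncard_multiset_sum_eq_card_partition (fun s => s.Nodup ∧ ∀ a ∈ s, 0 < a)
    (fun _ hs => hs.2) n
  rw [← Nat.card_coe_set_eq] at h
  refine h.trans (congrArg Finset.card (Finset.filter_congr fun p _ => ?_))
  exact and_iff_left fun a ha => p.parts_pos ha

theorem oddPartitionCount_one_natCast_eq_card_odds (n : ℕ) :
    oddPartitionCount 1 n = (Nat.Partition.odds n).card := by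
  classical
  refine (ncard_multiset_sum_eq_card_partition (fun s => ∀ a ∈ s, Odd a ∧ 1 ≤ a)
    (fun _ hs a ha => (hs a ha).2) n).trans
    (congrArg Finset.card (Finset.filter_congr fun p _ => ?_))
  exact forall₂_congr fun a ha =>
    (and_iff_left (p.parts_pos ha)).trans Nat.not_even_iff_odd.symm

section OddPartitions

variable {k : ℕ} {n : ℤ}

theorem oddPartitions_finite (k : ℕ) (n : ℤ) : (oddPartitions k n).Finite := by
  refine (Set.finite_range fun p : n.toNat.Partition => p.parts).subset ?_
  rintro s ⟨hsum, hs⟩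
  exact ⟨⟨s, fun {a} ha => (hs a ha).1.pos, by omega⟩, rfl⟩

theorem oddPartitionCount_pos_iff : 0 < oddPartitionCount k n ↔ (oddPartitions k n).Nonempty :=
  Set.ncard_pos (oddPartitions_finite k n)

theorem oddPartitions_antitone (n : ℤ) : Antitone fun k => oddPartitions k n :=
  fun _ _ hkl _ hs => ⟨hs.1, fun a ha => ⟨(hs.2 a ha).1, hkl.trans (hs.2 a ha).2⟩⟩

theorem oddPartitionCount_antitone (n : ℤ) : Antitone fun k => oddPartitionCount k n :=
  fun k _ hkl => Set.ncard_le_ncard (oddPartitions_antitone n hkl) (oddPartitions_finite k n)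

theorem oddPartitions_eq_union (hk : Odd k) (n : ℤ) :
    oddPartitions k n = oddPartitions (k + 2) n ∪ Multiset.cons k '' oddPartitions k (n - k) := by
  apply Set.Subset.antisymm
  · rintro s ⟨hsum, hs⟩
    by_cases hks : k ∈ s
    · obtain ⟨t, rfl⟩ := Multiset.exists_cons_of_mem hks
      rw [Multiset.sum_cons] at hsum
      exact Or.inr ⟨t, ⟨by omega, fun a ha => hs a (Multiset.mem_cons_of_mem ha)⟩, rfl⟩
    · refine Or.inl ⟨hsum, fun a ha => ⟨(hs a ha).1, ?_⟩⟩
      have hlt : k < a := (hs a ha).2.lt_of_ne fun h => hks (h ▸ ha)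
      have hodd := (hs a ha).1
      grind
  · refine Set.union_subset (oddPartitions_antitone n (Nat.le_add_right k 2)) ?_
    rintro _ ⟨t, ⟨hsum, ht⟩, rfl⟩
    exact ⟨by rw [Multiset.sum_cons]; omega, Multiset.forall_mem_cons.2 ⟨⟨hk, le_rfl⟩, ht⟩⟩

theorem oddPartitionCount_eq_add (hk : Odd k) (n : ℤ) :
    oddPartitionCount k n = oddPartitionCount (k + 2) n + oddPartitionCount k (n - k) := by
  have hdisj : Disjoint (oddPartitions (k + 2) n)
      (Multiset.cons k '' oddPartitions k (n - k)) := by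
    rw [Set.disjoint_left]
    rintro _ ⟨_, hs⟩ ⟨t, _, rfl⟩
    have : k + 2 ≤ k := (hs k (Multiset.mem_cons_self k t)).2
    omega
  unfold oddPartitionCount
  rw [oddPartitions_eq_union hk, Set.ncard_union_eq hdisj (oddPartitions_finite _ _)
    ((oddPartitions_finite _ _).image _),
    Set.ncard_image_of_injective _ fun _ _ => (Multiset.cons_inj_right k).1]

theorem oddPartitionCount_eq_zero (hn : n ≠ 0) (hnk : n < k) : oddPartitionCount k n = 0 := by
  refine Nat.eq_zero_of_not_pos (oddPartitionCount_pos_iff.not.2 ?_)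
  rintro ⟨s, hsum, hs⟩
  obtain rfl | ⟨a, ha⟩ := s.empty_or_exists_mem
  · exact hn (by simpa using hsum.symm)
  · have := Multiset.le_sum_of_mem ha
    have := (hs a ha).2
    omega

theorem oddPartitionCount_zero (k : ℕ) : oddPartitionCount k 0 = 1 := by
  refine Set.ncard_eq_one.2 ⟨0, Set.eq_singleton_iff_unique_mem.2 ⟨by simp [oddPartitions], ?_⟩⟩
  rintro s ⟨hsum, hs⟩
  refine Multiset.eq_zero_of_forall_notMem fun a ha => ?_
  have := Multiset.le_sum_of_mem ha
  have := (hs a ha).1.pos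
  omega

-- An even number is never a single odd part, so it needs none or at least two of them.
theorem oddPartitionCount_pos_iff_of_even (hk : Odd k) (hn : Even n) :
    0 < oddPartitionCount k n ↔ n = 0 ∨ 2 * k ≤ n := by
  rw [oddPartitionCount_pos_iff]
  constructor
  · rintro ⟨s, hsum, hs⟩
    obtain rfl | ⟨a, ha⟩ := s.empty_or_exists_mem
    · exact Or.inl (by simpa using hsum.symm)
    obtain ⟨t, rfl⟩ := Multiset.exists_cons_of_mem ha
    rw [Multiset.sum_cons] at hsum
    obtain ⟨⟨haodd, hka⟩, ht⟩ := Multiset.forall_mem_cons.1 hs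
    obtain rfl | ⟨b, hb⟩ := t.empty_or_exists_mem
    · rw [Multiset.sum_zero] at hsum
      grind
    · have := Multiset.le_sum_of_mem hb
      have := (ht b hb).2
      omega
  · rintro (rfl | hkn)
    · exact ⟨0, by simp [oddPartitions]⟩
    · lift n to ℕ using by omega
      refine ⟨{k, n - k}, ?_, ?_⟩
      · rw [Multiset.sum_pair]
        omega
      · have hodd : Odd (n - k) := by grind
        simpa [hk, hodd] using (by omega : k ≤ n - k)

end OddPartitions

-- Subtracting `d` from the smallest part is an injection witnessing this inequality.
theorem oddPartitionCount_add_le {k d : ℕ} {n : ℤ} (hk : Odd k) (hd : Even d) (hn : n ≠ 0) :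
    oddPartitionCount (k + d) n ≤ oddPartitionCount k (n - d) := by
  rcases lt_or_ge n (k + d : ℕ) with hlt | _
  · exact (oddPartitionCount_eq_zero hn hlt).trans_le (Nat.zero_le _)
  · calc oddPartitionCount (k + d) n
        = oddPartitionCount (k + 2 + d) n + oddPartitionCount (k + d) (n - d - k) := by
          rw [oddPartitionCount_eq_add (hk.add_even hd), add_right_comm k d 2, Nat.cast_add,
            sub_add_eq_sub_sub_swap]
      _ ≤ oddPartitionCount (k + 2) (n - d) + oddPartitionCount k (n - d - k) :=
          add_le_add (oddPartitionCount_add_le (hk.add_even even_two) hd hn)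
            (oddPartitionCount_antitone _ (Nat.le_add_right k d))
      _ = oddPartitionCount k (n - d) := (oddPartitionCount_eq_add hk _).symm
termination_by (n + 1 - k).toNat
decreasing_by omega

theorem oddPartitionCount_seven_lt {n : ℤ} (hn : 0 < n) (hdvd : 4 ∣ n) :
    oddPartitionCount 7 n < oddPartitionCount 3 (n - 4) + oddPartitionCount 3 (n - 8) := by
  have hle : oddPartitionCount 7 n ≤ oddPartitionCount 3 (n - 4) :=
    oddPartitionCount_add_le (k := 3) (d := 4) (by decide) (by decide) hn.ne'
  have hpos3 (m : ℤ) (hm : Even m) : 0 < oddPartitionCount 3 m ↔ m = 0 ∨ 6 ≤ m :=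
    oddPartitionCount_pos_iff_of_even (by decide) hm
  have hpos7 : 0 < oddPartitionCount 7 n ↔ n = 0 ∨ 14 ≤ n :=
    oddPartitionCount_pos_iff_of_even (by decide) (by grind)
  obtain hsmall | hlarge : (n = 4 ∨ n = 12) ∨ n = 8 ∨ 14 ≤ n := by omega
  · have hzero : oddPartitionCount 7 n = 0 := by omega
    have hpos : 0 < oddPartitionCount 3 (n - 4) := (hpos3 _ (by grind)).2 (by omega)
    omega
  · have hpos : 0 < oddPartitionCount 3 (n - 8) := (hpos3 _ (by grind)).2 (by omega)
    omega

theorem Q_eq_oddPartitionCount (n : ℤ) : Q n = oddPartitionCount 1 n := by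
  rcases lt_or_ge n 0 with hn | hn
  · rw [oddPartitionCount_eq_zero hn.ne (by omega)]
    have : IsEmpty {s : Multiset ℕ // (s.sum : ℤ) = n ∧ s.Nodup ∧ ∀ a ∈ s, 0 < a} :=
      ⟨fun s => by have := s.2.1; omega⟩
    exact Nat.card_of_isEmpty
  · lift n to ℕ using hn
    rw [Q_natCast_eq_card_distincts, oddPartitionCount_one_natCast_eq_card_odds,
      Nat.Partition.card_odds_eq_card_distincts]

theorem Q_sub_Q_sub_Q_add_Q_eq (n : ℤ) :
    (Q n : ℤ) - Q (n - 1) - Q (n - 3) + Q (n - 6) =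
      oddPartitionCount 7 n - oddPartitionCount 3 (n - 4) - oddPartitionCount 3 (n - 8) := by
  have rec_one (m : ℤ) : Q m = oddPartitionCount 3 m + Q (m - 1) := by
    rw [Q_eq_oddPartitionCount, Q_eq_oddPartitionCount]
    exact oddPartitionCount_eq_add odd_one m
  have rec_three (m : ℤ) :
      oddPartitionCount 3 m = oddPartitionCount 5 m + oddPartitionCount 3 (m - 3) :=
    oddPartitionCount_eq_add (by decide) m
  have rec_five :
      oddPartitionCount 5 n = oddPartitionCount 7 n + oddPartitionCount 5 (n - 5) :=
    oddPartitionCount_eq_add (by decide) n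
  calc (Q n : ℤ) - Q (n - 1) - Q (n - 3) + Q (n - 6)
      = oddPartitionCount 3 n - oddPartitionCount 3 (n - 3) - oddPartitionCount 3 (n - 4) -
          oddPartitionCount 3 (n - 5) := by
        grind
    _ = oddPartitionCount 5 n - oddPartitionCount 3 (n - 4) - oddPartitionCount 3 (n - 5) := by
        rw [rec_three n]
        omega
    _ = oddPartitionCount 7 n - oddPartitionCount 3 (n - 4) - oddPartitionCount 3 (n - 8) := by
        grind

/-- For every `n ≥ 0`, `Q(n) − Q(n−1) − Q(n−3) + Q(n−6) − ρ_4(n) ≤ 0`. -/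
theorem stmt17
    (ρ : ℤ → ℤ)
    (hρ1 : ∀ i : ℤ, ρ (4 * (i * (3 * i - 1) / 2)) = (-1) ^ i.natAbs)
    (hρ2 : ∀ m : ℤ, (∀ i : ℤ, m ≠ 4 * (i * (3 * i - 1) / 2)) → ρ m = 0)
    (n : ℤ) (hn : 0 ≤ n) :
    (Q n : ℤ) - (Q (n - 1) : ℤ) - (Q (n - 3) : ℤ) + (Q (n - 6) : ℤ) - ρ n ≤ 0 := by
  rw [Q_sub_Q_sub_Q_add_Q_eq]
  rcases hn.eq_or_lt with rfl | hpos
  · have hρ0 : ρ 0 = 1 := hρ1 0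
    rw [oddPartitionCount_zero, hρ0]
    omega
  by_cases hpent : ∃ i : ℤ, n = 4 * (i * (3 * i - 1) / 2)
  · obtain ⟨i, hi⟩ := hpent
    have hρ : -1 ≤ ρ n := by
      rw [hi, hρ1]
      rcases neg_one_pow_eq_or ℤ i.natAbs with h | h <;> omega
    have hlt := oddPartitionCount_seven_lt hpos ⟨_, hi⟩
    omega
  · have hρ : ρ n = 0 := hρ2 n (not_exists.1 hpent)
    have hle : oddPartitionCount 7 n ≤ oddPartitionCount 3 (n - 4) :=
      oddPartitionCount_add_le (k := 3) (d := 4) (by decide) (by decide) hpos.ne'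
    omega
end

section
/- Let k ≥ 1 and n ≥ 0 be integers. Then Σ_{j=k}^{∞} ( g(n − (15j² − j)/2) − g(n − (15j² + 11j + 2)/2) ) equals the number of pairs (j, λ) where j ≥ k is an integer and λ is a partition of n − (15j² − j)/2 all of whose parts are congruent to 1 or 4 modulo 5 and in which the part 1 occurs at most 6j times. (This is the combinatorial interpretation of Merca's sum u⁺_{g,1}(n) = Σ_{j=k}^{∞} ( g(n − 5j(3j+1)/2 + 3j) − g(n − 5j(3j+1)/2 − (3j+1)) ).) -/
/-- `g5 m` is the number of partitions of `m` all of whose parts are congruent to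
`1` or `4` mod `5`, with `g5 m = 0` for `m < 0`. A partition is a multiset of
positive parts. -/
noncomputable def g5 (m : ℤ) : ℕ :=
  Nat.card {s : Multiset ℕ // (s.sum : ℤ) = m ∧ ∀ a ∈ s, 0 < a ∧ (a % 5 = 1 ∨ a % 5 = 4)}

/-!
Removing `c` copies of the part `1` identifies the partitions of `m` in which `1` occurs at least
`c` times with the partitions of `m - c`. Since `(15j² + 11j + 2)/2 = (15j² - j)/2 + (6j + 1)`, the
`j`-th difference counts the partitions of `n - (15j² - j)/2` in which `1` occurs at most `6j`
times. Only finitely many `j` contribute, because `(15j² - j)/2 ≥ j`.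
-/

open Set

theorem tsum_ncard_eq_ncard_setOf_mem_and {ι β : Type*} {J : Set ι} {F : ι → Set β}
    (h : {x : ι × β | x.1 ∈ J ∧ x.2 ∈ F x.1}.Finite) :
    ∑' j : J, ((F j).ncard : ℤ) = {x : ι × β | x.1 ∈ J ∧ x.2 ∈ F x.1}.ncard := by
  let e : {x : ι × β | x.1 ∈ J ∧ x.2 ∈ F x.1} ≃ Σ j : J, F j :=
    { toFun := fun x => ⟨⟨x.1.1, x.2.1⟩, ⟨x.1.2, x.2.2⟩⟩
      invFun := fun y => ⟨(y.1, y.2), y.1.2, y.2.2⟩ }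
  have : Finite {x : ι × β | x.1 ∈ J ∧ x.2 ∈ F x.1} := h
  have : Finite (Σ j : J, F j) := Finite.of_equiv _ e
  calc ∑' j : J, ((F j).ncard : ℤ)
      = ∑' j : J, ∑' _ : F j, (1 : ℤ) := by simp [tsum_const]
    _ = ∑' _ : Σ j : J, F j, (1 : ℤ) :=
      (Summable.tsum_sigma (f := fun _ : Σ j : J, F j => (1 : ℤ)) .of_finite).symm
    _ = Nat.card (Σ j : J, F j) := by simp [tsum_const]
    _ = {x : ι × β | x.1 ∈ J ∧ x.2 ∈ F x.1}.ncard := by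
      rw [← Nat.card_congr e, Nat.card_coe_set_eq]

/-- The partitions of `m` all of whose parts lie in `S`, encoded as multisets of parts. The number
`m` is an integer, so that there are no such partitions when `m < 0`; a partition in the usual sense
requires `0 ∉ S`. -/
def partitionsWithParts (S : Set ℕ) (m : ℤ) : Set (Multiset ℕ) :=
  {s | (s.sum : ℤ) = m ∧ ∀ a ∈ s, a ∈ S}

section partitionsWithParts

variable {S : Set ℕ}

theorem finite_partitionsWithParts (hS : 0 ∉ S) (m : ℤ) : (partitionsWithParts S m).Finite := by
  refine (finite_range fun p : Nat.Partition m.toNat => p.parts).subset ?_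
  rintro s ⟨hsum, hparts⟩
  have pos : ∀ {a}, a ∈ s → 0 < a := fun ha =>
    Nat.pos_of_ne_zero fun h => hS (h ▸ hparts _ ha)
  exact ⟨⟨s, pos, by omega⟩, rfl⟩

theorem add_replicate_mem_partitionsWithParts_iff {a : ℕ} (ha : a ∈ S) {m : ℤ} {c : ℕ}
    {s : Multiset ℕ} :
    s + Multiset.replicate c a ∈ partitionsWithParts S m ↔
      s ∈ partitionsWithParts S (m - c * a) := by
  have hparts : (∀ b ∈ s + Multiset.replicate c a, b ∈ S) ↔ ∀ b ∈ s, b ∈ S := by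
    refine ⟨fun h b hb => h b (Multiset.mem_add.2 (.inl hb)), fun h b hb => ?_⟩
    rcases Multiset.mem_add.1 hb with hb | hb
    · exact h b hb
    · exact Multiset.eq_of_mem_replicate hb ▸ ha
  have hsum : ((s + Multiset.replicate c a).sum : ℤ) = m ↔ (s.sum : ℤ) = m - c * a := by
    rw [Multiset.sum_add, Multiset.sum_replicate, smul_eq_mul]
    push_cast
    exact eq_sub_iff_add_eq.symm
  exact and_congr hsum hparts

theorem sep_le_count_partitionsWithParts {a : ℕ} (ha : a ∈ S) (m : ℤ) (c : ℕ) :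
    {s ∈ partitionsWithParts S m | c ≤ s.count a} =
      (· + Multiset.replicate c a) '' partitionsWithParts S (m - c * a) := by
  ext s
  constructor
  · rintro ⟨hs, hc⟩
    obtain ⟨t, rfl⟩ := le_iff_exists_add'.1 (Multiset.le_count_iff_replicate_le.1 hc)
    exact ⟨t, (add_replicate_mem_partitionsWithParts_iff ha).1 hs, rfl⟩
  · rintro ⟨t, ht, rfl⟩
    exact ⟨(add_replicate_mem_partitionsWithParts_iff ha).2 ht, by simp⟩

theorem ncard_partitionsWithParts_sub_ncard (hS : 0 ∉ S) {a : ℕ} (ha : a ∈ S) (m : ℤ) (c : ℕ) :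
    ((partitionsWithParts S m).ncard : ℤ) - (partitionsWithParts S (m - c * a)).ncard =
      {s ∈ partitionsWithParts S m | s.count a < c}.ncard := by
  have hcompl : partitionsWithParts S m \ {s ∈ partitionsWithParts S m | s.count a < c} =
      {s ∈ partitionsWithParts S m | c ≤ s.count a} := by
    ext s; simp +contextual
  have hshift : {s ∈ partitionsWithParts S m | c ≤ s.count a}.ncard =
      (partitionsWithParts S (m - c * a)).ncard := by
    rw [sep_le_count_partitionsWithParts ha]
    exact ncard_image_of_injective _ (add_left_injective _)
  have hsplit := ncard_sdiff_add_ncard_of_subset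
    (sep_subset (partitionsWithParts S m) (·.count a < c)) (finite_partitionsWithParts hS m)
  rw [hcompl, hshift] at hsplit
  omega

theorem finite_setOf_mem_partitionsWithParts_sub (hS : 0 ∉ S) {ι : Type*} {J : Set ι} {f : ι → ℤ}
    {n : ℤ} (hf : {j ∈ J | f j ≤ n}.Finite) :
    {x : ι × Multiset ℕ | x.1 ∈ J ∧ x.2 ∈ partitionsWithParts S (n - f x.1)}.Finite := by
  refine (hf.biUnion fun j _ =>
    (finite_partitionsWithParts hS (n - f j)).image (Prod.mk j)).subset ?_
  rintro ⟨j, s⟩ ⟨hj, hs⟩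
  have hsum : (s.sum : ℤ) = n - f j := hs.1
  have hle : f j ≤ n := by omega
  exact mem_biUnion ⟨hj, hle⟩ (mem_image_of_mem _ hs)

theorem stmt19_general (hS : 0 ∉ S) {a : ℕ} (ha : a ∈ S) {ι : Type*} {J : Set ι} {f g : ι → ℤ}
    {c : ι → ℕ} (hg : ∀ j ∈ J, g j = f j + c j * a) {n : ℤ} (hf : {j ∈ J | f j ≤ n}.Finite) :
    ∑' j : J, (((partitionsWithParts S (n - f j)).ncard : ℤ) -
        (partitionsWithParts S (n - g j)).ncard) =
      {x : ι × Multiset ℕ | x.1 ∈ J ∧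
        x.2 ∈ partitionsWithParts S (n - f x.1) ∧ x.2.count a < c x.1}.ncard := by
  let B (j : ι) := {s ∈ partitionsWithParts S (n - f j) | s.count a < c j}
  have hterm (j : J) : ((partitionsWithParts S (n - f j)).ncard : ℤ) -
      (partitionsWithParts S (n - g j)).ncard = (B j).ncard := by
    rw [hg j j.2, ← sub_sub, ncard_partitionsWithParts_sub_ncard hS ha]
  have hfin : {x : ι × Multiset ℕ | x.1 ∈ J ∧ x.2 ∈ B x.1}.Finite :=
    (finite_setOf_mem_partitionsWithParts_sub hS hf).subset fun _ hx => ⟨hx.1, hx.2.1⟩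
  exact (tsum_congr hterm).trans (tsum_ncard_eq_ncard_setOf_mem_and hfin)

end partitionsWithParts

theorem fifteen_sq_add_div_two_eq (j : ℤ) :
    (15 * j ^ 2 + 11 * j + 2) / 2 = (15 * j ^ 2 - j) / 2 + (6 * j + 1) := by
  omega

theorem le_fifteen_sq_sub_div_two (j : ℤ) : j ≤ (15 * j ^ 2 - j) / 2 := by
  have : j ≤ j ^ 2 := Int.le_self_sq j
  have : 0 ≤ j ^ 2 := sq_nonneg j
  omega

theorem finite_setOf_fifteen_sq_sub_div_two_le (n : ℤ) :
    {j : ℕ | (15 * (j : ℤ) ^ 2 - j) / 2 ≤ n}.Finite :=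
  (finite_Iic n.toNat).subset fun j hj => by
    simpa using Int.toNat_le_toNat ((le_fifteen_sq_sub_div_two j).trans hj)

/-- For `k ≥ 1` and `n ≥ 0`,
`Σ_{j=k}^∞ (g(n − (15j² − j)/2) − g(n − (15j² + 11j + 2)/2))` equals the number of
pairs `(j, λ)` with `j ≥ k` and `λ` a partition of `n − (15j² − j)/2` all of whose
parts are `≡ 1` or `4 (mod 5)` and in which the part `1` occurs at most `6j` times. -/
theorem stmt19 (k : ℕ) (hk : 1 ≤ k) (n : ℤ) (hn : 0 ≤ n) :
    (∑' j : {j : ℕ // k ≤ j},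
        ((g5 (n - (15 * (j.1 : ℤ) ^ 2 - (j.1 : ℤ)) / 2) : ℤ) -
         (g5 (n - (15 * (j.1 : ℤ) ^ 2 + 11 * (j.1 : ℤ) + 2) / 2) : ℤ))) =
    (Nat.card {x : ℕ × Multiset ℕ //
        k ≤ x.1 ∧ (x.2.sum : ℤ) = n - (15 * (x.1 : ℤ) ^ 2 - (x.1 : ℤ)) / 2 ∧
        (∀ a ∈ x.2, 0 < a ∧ (a % 5 = 1 ∨ a % 5 = 4)) ∧
        x.2.count 1 ≤ 6 * x.1} : ℤ) := by
  have h := stmt19_general (S := {a | 0 < a ∧ (a % 5 = 1 ∨ a % 5 = 4)}) (a := 1) (J := Ici k)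
    (f := fun j : ℕ => (15 * (j : ℤ) ^ 2 - j) / 2)
    (g := fun j : ℕ => (15 * (j : ℤ) ^ 2 + 11 * j + 2) / 2) (c := fun j => 6 * j + 1)
    (by simp) (by simp) (fun j _ => by simpa using fifteen_sq_add_div_two_eq j)
    ((finite_setOf_fifteen_sq_sub_div_two_le n).subset fun _ hj => hj.2)
  simp only [partitionsWithParts, mem_ofPred_eq, mem_Ici, Nat.lt_succ_iff, and_assoc] at h
  exact h
end
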